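/- arXiv:2301.02155 — 2 statements merged into one kernel-verified Lean document; each statement's English description precedes it below -/
import Mathlib

section
/- Every pair (ᾱ, β̄) that is achievable by linear (2,2) PIR codes satisfies ᾱ + 6β̄ ≥ 6. -/
open scoped BigOperators

namespace PIR

/-- Messages are length-`L` vectors over `F_2`. -/
abbrev Msg (L : ℕ) := Fin L → ZMod 2

/-- A (2,2) PIR code (without the correctness condition) with message length `L`
and query alphabet `Q`.  The two messages are independent and uniform on `F_2^L`;
the queries are independent of the messages (built into the model: the query
distribution `P k` for desired message `k` does not depend on the messages). -/
structure CodeBase (L : ℕ) (Q : Type) [Fintype Q] [DecidableEq Q] where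
  /-- query distribution for desired message index `k` -/
  P : Fin 2 → Q × Q → ℝ
  P_nonneg : ∀ k qq, 0 ≤ P k qq
  P_sum : ∀ k, ∑ qq : Q × Q, P k qq = 1
  /-- number of stored `F_2` symbols at database `n` -/
  stor : Fin 2 → ℕ
  /-- storage encoders -/
  phi : (n : Fin 2) → Msg L × Msg L → (Fin (stor n) → ZMod 2)
  /-- answer lengths -/
  blen : Fin 2 → Q → ℕ
  /-- deterministic answer functions -/
  ans : (n : Fin 2) → (q : Q) → (Fin (stor n) → ZMod 2) → (Fin (blen n q) → ZMod 2)
  /-- decoding functions -/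
  dec : (k : Fin 2) → (q₁ q₂ : Q) → (Fin (blen 0 q₁) → ZMod 2) →
      (Fin (blen 1 q₂) → ZMod 2) → Msg L
  /-- Privacy: for each database `n`, the joint distribution of
  `(Q_n^{[k]}, A_n^{[k]}, S_n)` is the same for `k = 1, 2`.  Since the answer
  `A_n` is the fixed deterministic function `ans` of `(Q_n, S_n)` (not
  depending on `k`), this is expressed as equality of the joint distributions of
  `(Q_n, S_n)` (messages uniform, queries independent of messages). -/
  privacy : ∀ (n : Fin 2) (q : Q) (s : Fin (stor n) → ZMod 2),
    (∑ qq : Q × Q, if (if n = 0 then qq.1 else qq.2) = q then P 0 qq else 0) *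
      ((Finset.univ.filter (fun w : Msg L × Msg L => phi n w = s)).card : ℝ) =
    (∑ qq : Q × Q, if (if n = 0 then qq.1 else qq.2) = q then P 1 qq else 0) *
      ((Finset.univ.filter (fun w : Msg L × Msg L => phi n w = s)).card : ℝ)

variable {L : ℕ} {Q : Type} [Fintype Q] [DecidableEq Q]

/-- The desired message `W_k`. -/
def target (k : Fin 2) (w : Msg L × Msg L) : Msg L := if k = 0 then w.1 else w.2

/-- The decoder output `Ŵ_k` when the realized queries are `qq` and the messages `w`. -/
def retrieved (C : CodeBase L Q) (k : Fin 2) (qq : Q × Q) (w : Msg L × Msg L) : Msg L :=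
  C.dec k qq.1 qq.2 (C.ans 0 qq.1 (C.phi 0 w)) (C.ans 1 qq.2 (C.phi 1 w))

/-- Zero-error correctness: `Ŵ_k = W_k` for all realizations. -/
def IsZeroError (C : CodeBase L Q) : Prop :=
  ∀ (k : Fin 2) (w : Msg L × Msg L) (qq : Q × Q), C.P k qq ≠ 0 →
    retrieved C k qq w = target k w

/-- The average probability of error `P_e`. -/
noncomputable def Pe (C : CodeBase L Q) : ℝ :=
  (1/2) * ∑ k : Fin 2, ∑ w : Msg L × Msg L, ∑ qq : Q × Q,
    ((2:ℝ)^(2*L))⁻¹ * C.P k qq * (if retrieved C k qq w ≠ target k w then 1 else 0)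

/-- The retrieval rate `β_n = E[β_n^{(Q_n)}]` (the marginal of `Q_n` is the same
for `k=1,2` by privacy; we use `k=1`, i.e. index `0`). -/
noncomputable def betaRate (C : CodeBase L Q) (n : Fin 2) : ℝ :=
  ∑ qq : Q × Q, C.P 0 qq * (C.blen n (if n = 0 then qq.1 else qq.2) : ℝ)

/-- A linear PIR code: storage encoders and answer functions are `F_2`-linear. -/
def IsLinear (C : CodeBase L Q) : Prop :=
  (∀ n : Fin 2, IsLinearMap (ZMod 2) (C.phi n)) ∧
  (∀ (n : Fin 2) (q : Q), IsLinearMap (ZMod 2) (C.ans n q))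

/-- A bundled PIR code (with its query alphabet). -/
structure Code (L : ℕ) where
  Q : Type
  [fQ : Fintype Q]
  [dQ : DecidableEq Q]
  base : CodeBase L Q

attribute [instance] Code.fQ Code.dQ

/-- A normalized storage-retrieval pair `(ᾱ, β̄)` is achievable. -/
def Achievable (ab : ℝ × ℝ) : Prop :=
  ∀ ε > (0:ℝ), ∃ L₀ : ℕ, ∀ L ≥ L₀, ∃ C : Code L,
    IsZeroError C.base ∧
    ((C.base.stor 0 + C.base.stor 1 : ℕ) : ℝ) / 2 ≤ L * (ab.1 + ε) ∧
    (betaRate C.base 0 + betaRate C.base 1) / 2 ≤ L * (ab.2 + ε)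

/-- Achievability by linear codes. -/
def LinAchievable (ab : ℝ × ℝ) : Prop :=
  ∀ ε > (0:ℝ), ∃ L₀ : ℕ, ∀ L ≥ L₀, ∃ C : Code L,
    IsZeroError C.base ∧ IsLinear C.base ∧
    ((C.base.stor 0 + C.base.stor 1 : ℕ) : ℝ) / 2 ≤ L * (ab.1 + ε) ∧
    (betaRate C.base 0 + betaRate C.base 1) / 2 ≤ L * (ab.2 + ε)

/-- The achievable storage-retrieval rate region `R`. -/
def Region : Set (ℝ × ℝ) := { ab | Achievable ab }

/-- The query distribution used for the `(2,2)` PIR system: for message 1,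
uniform on `{(1,1),(2,2)}`; for message 2, uniform on `{(1,2),(2,1)}`. -/
noncomputable def stdP : Fin 2 → Fin 2 × Fin 2 → ℝ :=
  fun k qq => if (k = 0 ∧ qq.1 = qq.2) ∨ (k = 1 ∧ qq.1 ≠ qq.2) then 1/2 else 0

/-!
For a linear code everything is read off from kernels in the space `V = F_2^L × F_2^L`. Let `X q`
be the kernel of the answer of one database to the query `q`, let `Y q` be that of the other
database, and let `N k` be the kernel of `(W₁, W₂) ↦ W_k`. Decodability of `W_k` says
`X ⊓ Y ≤ N k`.

By privacy, a query pair for `W₁` and a query pair for `W₂` can be coupled so that both send the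
same query to the second database. For the resulting triple `(X, X', Y)` the four subspaces
`X ⊓ Y`, `X' ⊓ N 1`, `X' ⊓ Y`, `X ⊓ N 2` are independent inside `X ⊔ X'`: the first two lie in
`N 1`, the last two in `N 2`. Counting dimensions bounds `dim (X ⊓ N 2) + dim (X' ⊓ N 1)` from
above, with `codim (X ⊓ X')` at most the storage of the first database. Privacy at the first
database lets `dim (X ⊓ N k)` be averaged over a query pair for `W_k` instead, where it is at
least `dim (X ⊓ Y)`. Adding the two inequalities obtained by exchanging the databases gives the
bound.
-/

section Subspaces

open Module

variable {F V : Type*} [Field F] [AddCommGroup V] [Module F V]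

/-- The codimension of a subspace. For the kernel of a linear map it is the rank of the map, that
is, when `F` is finite, the entropy in symbols of `F` of the image of a uniform vector. -/
noncomputable def codim (X : Submodule F V) : ℕ := finrank F (V ⧸ X)

theorem codim_ker_le_finrank {W : Type*} [AddCommGroup W] [Module F W] [FiniteDimensional F W]
    (f : V →ₗ[F] W) : codim (LinearMap.ker f) ≤ finrank F W :=
  f.quotKerEquivRange.finrank_eq.trans_le (Submodule.finrank_le _)

variable [FiniteDimensional F V]

theorem codim_add_finrank (X : Submodule F V) : codim X + finrank F X = finrank F V :=
  X.finrank_quotient_add_finrank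

theorem codim_le_codim_of_le {X Y : Submodule F V} (h : X ≤ Y) : codim Y ≤ codim X := by
  have hX := codim_add_finrank X
  have hY := codim_add_finrank Y
  have hXY := Submodule.finrank_mono h
  omega

theorem finrank_le_finrank_inf_add_codim (X Y : Submodule F V) :
    finrank F V ≤ finrank F ↥(X ⊓ Y) + codim X + codim Y := by
  have hsup := Submodule.finrank_sup_add_finrank_inf_eq X Y
  have hle := Submodule.finrank_le (X ⊔ Y)
  have hX := codim_add_finrank X
  have hY := codim_add_finrank Y
  omega

theorem finrank_add_finrank_le_of_disjoint_of_le {A B C : Submodule F V} (hAB : Disjoint A B)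
    (hA : A ≤ C) (hB : B ≤ C) : finrank F A + finrank F B ≤ finrank F C := by
  have hsup := Submodule.finrank_sup_add_finrank_inf_eq A B
  rw [hAB.eq_bot, finrank_bot] at hsup
  exact hsup.symm.trans_le (Submodule.finrank_mono (sup_le hA hB))

variable {X X' Y N₁ N₂ : Submodule F V}

theorem sum_finrank_inf_le_finrank_sup (hN : Disjoint N₁ N₂) (h₁ : X ⊓ Y ≤ N₁)
    (h₂ : X' ⊓ Y ≤ N₂) :
    (finrank F ↥(X ⊓ Y) + finrank F ↥(X' ⊓ N₁)) + (finrank F ↥(X' ⊓ Y) + finrank F ↥(X ⊓ N₂)) ≤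
      finrank F ↥(X ⊔ X') := by
  have hX : Disjoint (X ⊓ Y) X' := disjoint_iff_inf_le.mpr <|
    (le_inf (inf_le_left.trans h₁) <|
      (le_inf inf_le_right (inf_le_left.trans inf_le_right)).trans h₂).trans hN.le_bot
  have hX' : Disjoint (X' ⊓ Y) X := disjoint_iff_inf_le.mpr <|
    (le_inf ((le_inf inf_le_right (inf_le_left.trans inf_le_right)).trans h₁)
      (inf_le_left.trans h₂)).trans hN.le_bot
  have hN₁ := finrank_add_finrank_le_of_disjoint_of_le (C := (X ⊔ X') ⊓ N₁)
    (hX.mono_right (inf_le_left : X' ⊓ N₁ ≤ X'))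
    (le_inf (inf_le_left.trans le_sup_left) h₁) (inf_le_inf_right _ le_sup_right)
  have hN₂ := finrank_add_finrank_le_of_disjoint_of_le (C := (X ⊔ X') ⊓ N₂)
    (hX'.mono_right (inf_le_left : X ⊓ N₂ ≤ X))
    (le_inf (inf_le_left.trans le_sup_right) h₂) (inf_le_inf_right _ le_sup_left)
  have hsup := finrank_add_finrank_le_of_disjoint_of_le (C := X ⊔ X')
    (hN.mono inf_le_right inf_le_right) inf_le_left inf_le_left
  exact (add_le_add hN₁ hN₂).trans hsup

theorem finrank_add_finrank_inf_add_finrank_inf_le (hN : Disjoint N₁ N₂) (h₁ : X ⊓ Y ≤ N₁)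
    (h₂ : X' ⊓ Y ≤ N₂) :
    finrank F V + finrank F ↥(X ⊓ N₂) + finrank F ↥(X' ⊓ N₁) ≤
      codim (X ⊓ X') + 2 * codim Y := by
  have hsum := sum_finrank_inf_le_finrank_sup hN h₁ h₂
  have hsup := Submodule.finrank_sup_add_finrank_inf_eq X X'
  have hXY := finrank_le_finrank_inf_add_codim X Y
  have hX'Y := finrank_le_finrank_inf_add_codim X' Y
  have hX := codim_add_finrank X
  have hX' := codim_add_finrank X'
  have hXX' := codim_add_finrank (X ⊓ X')
  omega

end Subspaces

section Coupling

variable {α β γ δ : Type*} [Fintype α] [Fintype β] {p : α → ℝ} {q : β → ℝ} {f : α → γ} {g : β → γ}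

theorem sum_mul_le_sum_mul_of_ne_zero {u v : α → ℝ} (hp : ∀ a, 0 ≤ p a)
    (h : ∀ a, p a ≠ 0 → u a ≤ v a) : ∑ a, p a * u a ≤ ∑ a, p a * v a := by
  refine Finset.sum_le_sum fun a _ => ?_
  obtain ha | ha := eq_or_ne (p a) 0
  · simp only [ha, zero_mul, le_refl]
  · exact mul_le_mul_of_nonneg_left (h a ha) (hp a)

/-- The variables `f` and `g`, on finite spaces with weights `p` and `q`, have the same
distribution. Stated through expectations of test functions, which makes `SameLaw.comp` immediate
and requires no decidable equality of values. -/
def SameLaw (p : α → ℝ) (f : α → γ) (q : β → ℝ) (g : β → γ) : Prop :=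
  ∀ h : γ → ℝ, ∑ a, p a * h (f a) = ∑ b, q b * h (g b)

theorem SameLaw.comp (h : SameLaw p f q g) (k : γ → δ) :
    SameLaw p (fun a => k (f a)) q (fun b => k (g b)) :=
  fun t => h fun c => t (k c)

theorem SameLaw.sum_eq (h : SameLaw p f q g) : ∑ a, p a = ∑ b, q b := by
  simpa only [mul_one] using h fun _ => 1

section FiberMass

variable [DecidableEq γ]

/-- The mass that the distribution of `f`, under the weight `p`, gives to the value `c`. -/
noncomputable def fiberMass (p : α → ℝ) (f : α → γ) (c : γ) : ℝ :=
  ∑ a, if f a = c then p a else 0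

theorem sum_mul_comp_eq_sum_fiberMass_mul (p : α → ℝ) (h : γ → ℝ) {s : Finset γ}
    (hs : ∀ a, f a ∈ s) : ∑ a, p a * h (f a) = ∑ c ∈ s, fiberMass p f c * h c := by
  simp only [fiberMass, Finset.sum_mul, ite_mul, zero_mul]
  rw [Finset.sum_comm]
  simp only [Finset.sum_ite_eq, hs, if_true]

theorem SameLaw.of_fiberMass_eq (h : ∀ c, fiberMass p f c = fiberMass q g c) :
    SameLaw p f q g := fun t => by
  let s := Finset.univ.image f ∪ Finset.univ.image g
  have hf : ∀ a, f a ∈ s := fun a =>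
    Finset.mem_union_left _ (Finset.mem_image_of_mem f (Finset.mem_univ a))
  have hg : ∀ b, g b ∈ s := fun b =>
    Finset.mem_union_right _ (Finset.mem_image_of_mem g (Finset.mem_univ b))
  rw [sum_mul_comp_eq_sum_fiberMass_mul p t hf, sum_mul_comp_eq_sum_fiberMass_mul q t hg]
  simp only [h]

theorem SameLaw.fiberMass_eq (h : SameLaw p f q g) (c : γ) :
    fiberMass p f c = fiberMass q g c := by
  simpa only [fiberMass, mul_ite, mul_one, mul_zero] using h fun d => if d = c then 1 else 0

theorem mul_fiberMass_div_fiberMass (hp : ∀ a, 0 ≤ p a) (a : α) :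
    p a * fiberMass p f (f a) / fiberMass p f (f a) = p a := by
  refine mul_div_cancel_of_imp fun h => ?_
  have hle : p a ≤ fiberMass p f (f a) := by
    simpa only [fiberMass, if_true] using Finset.single_le_sum
      (f := fun b => if f b = f a then p b else 0)
      (fun b _ => by split_ifs <;> simp only [hp, le_refl]) (Finset.mem_univ a)
  exact le_antisymm (hle.trans_eq h) (hp a)

end FiberMass

theorem SameLaw.exists_coupling (h : SameLaw p f q g) (hp : ∀ a, 0 ≤ p a) (hq : ∀ b, 0 ≤ q b) :
    ∃ T : α → β → ℝ, (∀ a b, 0 ≤ T a b) ∧ (∀ a, ∑ b, T a b = p a) ∧ (∀ b, ∑ a, T a b = q b) ∧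
      ∀ a b, T a b ≠ 0 → p a ≠ 0 ∧ q b ≠ 0 ∧ f a = g b := by
  classical
  -- `f` and `g` are made conditionally independent given their common value.
  refine ⟨fun a b => if g b = f a then p a * q b / fiberMass p f (f a) else 0,
    fun a b => ?_, fun a => ?_, fun b => ?_, fun a b hT => ?_⟩
  · have hmass : 0 ≤ fiberMass p f (f a) :=
      Finset.sum_nonneg fun c _ => by split_ifs <;> simp only [hp, le_refl]
    have := div_nonneg (mul_nonneg (hp a) (hq b)) hmass
    dsimp only
    split_ifs <;> simp only [this, le_refl]
  · calc ∑ b, (if g b = f a then p a * q b / fiberMass p f (f a) else 0)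
        = p a * fiberMass q g (f a) / fiberMass p f (f a) := by
          simp only [fiberMass, Finset.mul_sum, Finset.sum_div, mul_ite, mul_zero, ite_div,
            zero_div]
      _ = p a := by rw [← h.fiberMass_eq, mul_fiberMass_div_fiberMass hp]
  · calc ∑ a, (if g b = f a then p a * q b / fiberMass p f (f a) else 0)
        = ∑ a, (if f a = g b then p a else 0) * q b / fiberMass p f (g b) :=
          Finset.sum_congr rfl fun a _ => by
            obtain hab | hab := eq_or_ne (f a) (g b)
            · simp only [hab, if_true]
            · simp only [hab, hab.symm, if_false, zero_mul, zero_div]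
      _ = q b * fiberMass q g (g b) / fiberMass q g (g b) := by
          rw [← Finset.sum_div, ← Finset.sum_mul, ← fiberMass, h.fiberMass_eq, mul_comm]
      _ = q b := mul_fiberMass_div_fiberMass hq b
  · simp only [ne_eq, ite_eq_right_iff, Classical.not_imp, div_eq_zero_iff, mul_eq_zero,
      not_or] at hT
    exact ⟨hT.2.1.1, hT.2.1.2, hT.1.symm⟩

theorem SameLaw.sum_mul_add_sum_mul_le (h : SameLaw p f q g) (hp : ∀ a, 0 ≤ p a)
    (hq : ∀ b, 0 ≤ q b) {u w : α → ℝ} {v : β → ℝ}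
    (huv : ∀ a b, p a ≠ 0 → q b ≠ 0 → f a = g b → u a + v b ≤ w a) :
    ∑ a, p a * u a + ∑ b, q b * v b ≤ ∑ a, p a * w a := by
  obtain ⟨T, hT, hTp, hTq, hsupp⟩ := h.exists_coupling hp hq
  calc ∑ a, p a * u a + ∑ b, q b * v b
      = ∑ a, ∑ b, T a b * (u a + v b) := by
        simp only [mul_add, Finset.sum_add_distrib, ← hTp, ← hTq, Finset.sum_mul]
        rw [Finset.sum_comm (f := fun b a => T a b * v b)]
    _ ≤ ∑ a, ∑ b, T a b * w a :=
        Finset.sum_le_sum fun a _ => sum_mul_le_sum_mul_of_ne_zero (hT a) fun b hab =>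
          have ⟨ha, hb, hfg⟩ := hsupp a b hab
          huv a b ha hb hfg
    _ = ∑ a, p a * w a := by simp only [← Finset.sum_mul, hTp]

end Coupling

section RandomSubspaces

open Module

variable {F V Ω : Type*} [Field F] [AddCommGroup V] [Module F V] [FiniteDimensional F V] [Fintype Ω]
  {p q : Ω → ℝ} {X Y : Ω → Submodule F V} {K N N₁ N₂ : Submodule F V}

theorem finrank_le_sum_finrank_inf_add_sum_codim (hp : ∀ ω, 0 ≤ p ω) (hp_sum : ∑ ω, p ω = 1)
    (hN : ∀ ω, p ω ≠ 0 → X ω ⊓ Y ω ≤ N) :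
    (finrank F V : ℝ) ≤ ∑ ω, p ω * (finrank F ↥(X ω ⊓ N) : ℝ) + ∑ ω, p ω * (codim (X ω) : ℝ) +
      ∑ ω, p ω * (codim (Y ω) : ℝ) := by
  calc (finrank F V : ℝ) = ∑ ω, p ω * (finrank F V : ℝ) := by
        rw [← Finset.sum_mul, hp_sum, one_mul]
    _ ≤ ∑ ω, p ω * ((finrank F ↥(X ω ⊓ N) : ℝ) + codim (X ω) + codim (Y ω)) :=
        sum_mul_le_sum_mul_of_ne_zero hp fun ω hω => by
          have hinf := Submodule.finrank_mono (le_inf inf_le_left (hN ω hω))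
          have hV := finrank_le_finrank_inf_add_codim (X ω) (Y ω)
          exact_mod_cast (by omega :
            finrank F V ≤ finrank F ↥(X ω ⊓ N) + codim (X ω) + codim (Y ω))
    _ = _ := by simp only [mul_add, Finset.sum_add_distrib]

theorem SameLaw.sum_finrank_inf_add_sum_finrank_inf_le (hY : SameLaw p Y q Y)
    (hp : ∀ ω, 0 ≤ p ω) (hp_sum : ∑ ω, p ω = 1) (hq : ∀ ω, 0 ≤ q ω) (hN : Disjoint N₁ N₂)
    (h₁ : ∀ ω, p ω ≠ 0 → X ω ⊓ Y ω ≤ N₁) (h₂ : ∀ ω, q ω ≠ 0 → X ω ⊓ Y ω ≤ N₂)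
    (hK : ∀ ω, K ≤ X ω) :
    (finrank F V : ℝ) + ∑ ω, p ω * (finrank F ↥(X ω ⊓ N₂) : ℝ) +
        ∑ ω, q ω * (finrank F ↥(X ω ⊓ N₁) : ℝ) ≤
      codim K + 2 * ∑ ω, p ω * (codim (Y ω) : ℝ) := by
  have hpointwise : ∀ ω ω', p ω ≠ 0 → q ω' ≠ 0 → Y ω = Y ω' →
      (finrank F ↥(X ω ⊓ N₂) : ℝ) + finrank F ↥(X ω' ⊓ N₁) ≤
        (codim K - finrank F V) + 2 * codim (Y ω) := fun ω ω' hω hω' hYY' => by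
    have hdim := finrank_add_finrank_inf_add_finrank_inf_le hN (h₁ ω hω) (hYY' ▸ h₂ ω' hω')
    have hcodim := codim_le_codim_of_le (le_inf (hK ω) (hK ω'))
    have hreal : (finrank F V + finrank F ↥(X ω ⊓ N₂) + finrank F ↥(X ω' ⊓ N₁) : ℝ) ≤
        codim K + 2 * codim (Y ω) := by
      exact_mod_cast hdim.trans (Nat.add_le_add_right hcodim _)
    linarith
  have haverage := hY.sum_mul_add_sum_mul_le hp hq hpointwise
  simp only [mul_add, Finset.sum_add_distrib, ← Finset.sum_mul, hp_sum, one_mul,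
    mul_left_comm _ (2 : ℝ), ← Finset.mul_sum] at haverage
  linarith

theorem three_mul_finrank_le_of_sameLaw (hX : SameLaw p X q X) (hY : SameLaw p Y q Y)
    (hp : ∀ ω, 0 ≤ p ω) (hp_sum : ∑ ω, p ω = 1) (hq : ∀ ω, 0 ≤ q ω) (hN : Disjoint N₁ N₂)
    (h₁ : ∀ ω, p ω ≠ 0 → X ω ⊓ Y ω ≤ N₁) (h₂ : ∀ ω, q ω ≠ 0 → X ω ⊓ Y ω ≤ N₂)
    (hK : ∀ ω, K ≤ X ω) :
    3 * (finrank F V : ℝ) ≤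
      codim K + 2 * ∑ ω, p ω * (codim (X ω) : ℝ) + 4 * ∑ ω, p ω * (codim (Y ω) : ℝ) := by
  have hupper := hY.sum_finrank_inf_add_sum_finrank_inf_le hp hp_sum hq hN h₁ h₂ hK
  have hlower₁ := finrank_le_sum_finrank_inf_add_sum_codim hp hp_sum h₁
  have hlower₂ := finrank_le_sum_finrank_inf_add_sum_codim hq (hX.sum_eq ▸ hp_sum) h₂
  rw [← hX fun Z => (finrank F ↥(Z ⊓ N₂) : ℝ), ← hX fun Z => (codim Z : ℝ),
    ← hY fun Z => (codim Z : ℝ)] at hlower₂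
  rw [← hX fun Z => (finrank F ↥(Z ⊓ N₁) : ℝ)] at hupper
  linarith

end RandomSubspaces

section LinearCodes

open Module

variable {C : CodeBase L Q}

/-- The query sent to database `n`. The `if` is the one in `CodeBase.privacy` and `betaRate`. -/
def query (n : Fin 2) (qq : Q × Q) : Q := if n = 0 then qq.1 else qq.2

theorem sameLaw_query (C : CodeBase L Q) (n : Fin 2) :
    SameLaw (C.P 0) (query n) (C.P 1) (query n) :=
  .of_fiberMass_eq fun q => by
    have hcard : 0 < (Finset.univ.filter fun w => C.phi n w = C.phi n 0).card :=
      Finset.card_pos.mpr ⟨0, Finset.mem_filter.mpr ⟨Finset.mem_univ _, rfl⟩⟩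
    exact mul_right_cancel₀ (Nat.cast_ne_zero.mpr hcard.ne') (C.privacy n q (C.phi n 0))

/-- The map `(W₁, W₂) ↦ W_k` as a linear map; its values are those of `target`. -/
def targetMap (L : ℕ) (k : Fin 2) : Msg L × Msg L →ₗ[ZMod 2] Msg L :=
  if k = 0 then LinearMap.fst _ _ _ else LinearMap.snd _ _ _

theorem targetMap_apply (k : Fin 2) (w : Msg L × Msg L) : targetMap L k w = target k w := by
  unfold targetMap target
  split_ifs <;> rfl

theorem disjoint_ker_targetMap (L : ℕ) :
    Disjoint (LinearMap.ker (targetMap L 0)) (LinearMap.ker (targetMap L 1)) := by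
  change Disjoint (LinearMap.ker (LinearMap.fst _ _ _)) (LinearMap.ker (LinearMap.snd _ _ _))
  rw [LinearMap.ker_fst, LinearMap.ker_snd]
  exact LinearMap.disjoint_inl_inr.symm

/-- The storage encoder of database `n` of a linear code, as a linear map. -/
def IsLinear.storageMap (hl : IsLinear C) (n : Fin 2) :
    Msg L × Msg L →ₗ[ZMod 2] Fin (C.stor n) → ZMod 2 :=
  (hl.1 n).mk'

/-- The answer of database `n` to the query `q` in a linear code, as a linear function of the two
messages rather than of the stored symbols. -/
def IsLinear.answerMap (hl : IsLinear C) (n : Fin 2) (q : Q) :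
    Msg L × Msg L →ₗ[ZMod 2] Fin (C.blen n q) → ZMod 2 :=
  (hl.2 n q).mk' ∘ₗ hl.storageMap n

theorem IsLinear.ker_storageMap_le_ker_answerMap (hl : IsLinear C) (n : Fin 2) (q : Q) :
    LinearMap.ker (hl.storageMap n) ≤ LinearMap.ker (hl.answerMap n q) :=
  LinearMap.ker_le_ker_comp _ _

theorem IsZeroError.ker_answerMap_inf_le (hz : IsZeroError C) (hl : IsLinear C) {k : Fin 2}
    {qq : Q × Q} (hqq : C.P k qq ≠ 0) :
    LinearMap.ker (hl.answerMap 0 qq.1) ⊓ LinearMap.ker (hl.answerMap 1 qq.2) ≤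
      LinearMap.ker (targetMap L k) := fun w hw => by
  have hans₀ : C.ans 0 qq.1 (C.phi 0 w) = C.ans 0 qq.1 (C.phi 0 0) :=
    hw.1.trans (map_zero (hl.answerMap 0 qq.1)).symm
  have hans₁ : C.ans 1 qq.2 (C.phi 1 w) = C.ans 1 qq.2 (C.phi 1 0) :=
    hw.2.trans (map_zero (hl.answerMap 1 qq.2)).symm
  have hretrieved : retrieved C k qq w = retrieved C k qq 0 := by
    rw [retrieved, retrieved, hans₀, hans₁]
  rw [LinearMap.mem_ker, targetMap_apply, ← hz k w qq hqq, hretrieved, hz k 0 qq hqq,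
    ← targetMap_apply, map_zero]

theorem IsZeroError.ker_answerMap_query_inf_le (hz : IsZeroError C) (hl : IsLinear C)
    {n m : Fin 2} (hnm : n ≠ m) {k : Fin 2} {qq : Q × Q} (hqq : C.P k qq ≠ 0) :
    LinearMap.ker (hl.answerMap n (query n qq)) ⊓ LinearMap.ker (hl.answerMap m (query m qq)) ≤
      LinearMap.ker (targetMap L k) := by
  obtain ⟨rfl, rfl⟩ | ⟨rfl, rfl⟩ : n = 0 ∧ m = 1 ∨ n = 1 ∧ m = 0 := by omega
  · exact hz.ker_answerMap_inf_le hl hqq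
  · exact inf_comm _ _ |>.trans_le (hz.ker_answerMap_inf_le hl hqq)

theorem IsLinear.sum_codim_ker_answerMap_le_betaRate (hl : IsLinear C) (n : Fin 2) :
    ∑ qq, C.P 0 qq * (codim (LinearMap.ker (hl.answerMap n (query n qq))) : ℝ) ≤ betaRate C n :=
  Finset.sum_le_sum fun qq _ => mul_le_mul_of_nonneg_left
    (Nat.cast_le.mpr <| (codim_ker_le_finrank _).trans_eq (finrank_fin_fun _)) (C.P_nonneg 0 qq)

theorem IsZeroError.six_mul_length_le (hz : IsZeroError C) (hl : IsLinear C) {n m : Fin 2}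
    (hnm : n ≠ m) : 6 * (L : ℝ) ≤ C.stor n + 2 * betaRate C n + 4 * betaRate C m := by
  have hbound := three_mul_finrank_le_of_sameLaw
    ((sameLaw_query C n).comp fun q => LinearMap.ker (hl.answerMap n q))
    ((sameLaw_query C m).comp fun q => LinearMap.ker (hl.answerMap m q))
    (C.P_nonneg 0) (C.P_sum 0) (C.P_nonneg 1) (disjoint_ker_targetMap L)
    (fun _ => hz.ker_answerMap_query_inf_le hl hnm) (fun _ => hz.ker_answerMap_query_inf_le hl hnm)
    fun qq => hl.ker_storageMap_le_ker_answerMap n (query n qq)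
  have hstor : (codim (LinearMap.ker (hl.storageMap n)) : ℝ) ≤ C.stor n :=
    Nat.cast_le.mpr <| (codim_ker_le_finrank _).trans_eq (finrank_fin_fun _)
  have hn := hl.sum_codim_ker_answerMap_le_betaRate n
  have hm := hl.sum_codim_ker_answerMap_le_betaRate m
  rw [finrank_prod, finrank_fin_fun, Nat.cast_add] at hbound
  linarith

theorem IsZeroError.twelve_mul_length_le (hz : IsZeroError C) (hl : IsLinear C) :
    12 * (L : ℝ) ≤ (C.stor 0 + C.stor 1 : ℕ) + 6 * (betaRate C 0 + betaRate C 1) := by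
  have h₀₁ := hz.six_mul_length_le hl zero_ne_one
  have h₁₀ := hz.six_mul_length_le hl one_ne_zero
  push_cast
  linarith

end LinearCodes

/-- Every pair `(ᾱ, β̄)` achievable by linear (2,2) PIR codes satisfies
`ᾱ + 6β̄ ≥ 6`. -/
theorem statement7 (ab : ℝ × ℝ) (h : LinAchievable ab) : 6 ≤ ab.1 + 6 * ab.2 := by
  refine le_of_forall_pos_le_add fun δ hδ => ?_
  obtain ⟨L₀, hL₀⟩ := h (δ / 7) (by positivity)
  obtain ⟨C, hz, hl, hstorage, hretrieval⟩ := hL₀ (L₀ + 1) L₀.le_succ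
  have hbound := hz.twelve_mul_length_le hl
  have hpos : (0 : ℝ) < (L₀ + 1 : ℕ) := Nat.cast_pos.mpr L₀.succ_pos
  refine le_of_mul_le_mul_left ?_ hpos
  linarith

end PIR
end

section
/- For every integer t ≥ 1, the region R̃^{(t)}_in is contained in the achievable storage-retrieval rate region R of the (2,2) PIR problem, where R̃^{(t)}_in is defined as follows. Let (V1, V2) be independent uniform random variables on F_2^t × F_2^t. R̃^{(t)}_in is the set of pairs (ᾱ, β̄) for which there exist finite-valued random variables (X0, X1, X2, Y1, Y2) jointly distributed with (V1, V2) such that: (1) the joint distribution factorizes as P(V1,V2,X0,X1,X2,Y1,Y2) = P(V1,V2)·P(X0|V1,V2)·P(X1|V1,V2)·P(X2|V1,V2)·P(Y1|V1,V2)·P(Y2|V1,V2); (2) there exist deterministic functions with V1 = f_{1,1}(X0,X1,Y1) = f_{2,2}(X0,X2,Y2) and V2 = f_{1,2}(X0,X1,Y2) = f_{2,1}(X0,X2,Y1); (3) the rates are set as γ1^(0) = I(V1,V2;X0), γ1^(1) = I(V1,V2;X1), γ1^(2) = I(V1,V2;X2), γ2^(1) = I(V1,V2;Y1), γ2^(2)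 = I(V1,V2;Y2), β1^(0) = γ1^(0), β1^(1) = I(V1,V2;X1|X0), β1^(2) = I(V1,V2;X2|X0), β2^(1) = max(I(V1,V2;Y1|X0,X1), I(V1,V2;Y1|X0,X2)), β2^(2) = max(I(V1,V2;Y2|X0,X1), I(V1,V2;Y2|X0,X2)), α1^(0) = γ1^(0), and storage rates (α1^(1),α1^(2),α2^(1),α2^(2)) are chosen as: if γ1^(0)−β1^(0)+γ1^(1)−β1^(1)+γ1^(2)−β1^(2) < H(X0)+H(X1)+H(X2)−H(X0,X1,X2) then (α1^(0),α1^(1),α1^(2),γ1^(0),γ1^(1),γ1^(2)) ∈ R*_MD(((V1,V2),X0,X1,X2), ({X0,X1,X2})), otherwise (α1^(1),α1^(2)) = (β1^(1),β1^(2)); and if γ2^(1)−β2^(1)+γ2^(2)−β2^(2) < I(Y1;Y2) then (α2^(1),α2^(2),γ2^(1),γ2^(2)) ∈ R*_MD(((V1,V2),Y1,Y2), ({Y1,Y2})), otherwise (α2^(1),α2^(2)) = (β2^(1),β2^(2)); (4) 2t·ᾱ ≥ α1^(0)+α1^(1)+α1^(2)+α2^(1)+α2^(2) and 4t·β̄ ≥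 2β1^(0)+β1^(1)+β1^(2)+β2^(1)+β2^(2). -/
open scoped BigOperators

namespace PIR

variable {L : ℕ} {Q : Type} [Fintype Q] [DecidableEq Q]

/-- Probability that a random variable `X` (on finite sample space `Ω` with
probability mass function `p`) takes the value `x`. -/
noncomputable def prOf {Ω : Type} [Fintype Ω] {γ : Type} [DecidableEq γ]
    (p : Ω → ℝ) (X : Ω → γ) (x : γ) : ℝ :=
  ∑ ω : Ω, if X ω = x then p ω else 0

/-- Shannon entropy (in bits) of the random variable `X`. -/
noncomputable def ent {Ω : Type} [Fintype Ω] {γ : Type} [Fintype γ] [DecidableEq γ]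
    (p : Ω → ℝ) (X : Ω → γ) : ℝ :=
  ∑ x : γ, -(prOf p X x * Real.logb 2 (prOf p X x))

/-- Conditional entropy `H(X|Y) = H(X,Y) - H(Y)` (in bits). -/
noncomputable def condEnt {Ω : Type} [Fintype Ω] {γ δ : Type} [Fintype γ] [DecidableEq γ]
    [Fintype δ] [DecidableEq δ] (p : Ω → ℝ) (X : Ω → γ) (Y : Ω → δ) : ℝ :=
  ent p (fun ω => (X ω, Y ω)) - ent p Y

/-- Mutual information `I(X;Y)` (in bits). -/
noncomputable def mi {Ω : Type} [Fintype Ω] {γ δ : Type} [Fintype γ] [DecidableEq γ]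
    [Fintype δ] [DecidableEq δ] (p : Ω → ℝ) (X : Ω → γ) (Y : Ω → δ) : ℝ :=
  ent p X + ent p Y - ent p (fun ω => (X ω, Y ω))

/-- Conditional mutual information `I(X;Y|Z)` (in bits). -/
noncomputable def cmi {Ω : Type} [Fintype Ω] {γ δ ε : Type} [Fintype γ] [DecidableEq γ]
    [Fintype δ] [DecidableEq δ] [Fintype ε] [DecidableEq ε]
    (p : Ω → ℝ) (X : Ω → γ) (Y : Ω → δ) (Z : Ω → ε) : ℝ :=
  ent p (fun ω => (X ω, Z ω)) + ent p (fun ω => (Y ω, Z ω))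
    - ent p (fun ω => (X ω, Y ω, Z ω)) - ent p Z

/-- Joint entropy `H({U_i, i ∈ A})` of the subfamily indexed by `A`. -/
noncomputable def jEnt {Ω : Type} [Fintype Ω] {γ : Type} [Fintype γ] [DecidableEq γ]
    {M : ℕ} (p : Ω → ℝ) (U : Fin M → Ω → γ) (A : Finset (Fin M)) : ℝ :=
  ent p (fun ω => fun i : {i // i ∈ A} => U i.1 ω)

/-- Conditional joint entropy `H({U_j, j ∈ J} | {U_j', j' ∈ B})`. -/
noncomputable def cjEnt {Ω : Type} [Fintype Ω] {γ : Type} [Fintype γ] [DecidableEq γ]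
    {M : ℕ} (p : Ω → ℝ) (U : Fin M → Ω → γ) (J B : Finset (Fin M)) : ℝ :=
  jEnt p U (J ∪ B) - jEnt p U B

/-- Conditional joint entropy `H({U_i, i ∈ A} | S)`. -/
noncomputable def jEntCondS {Ω : Type} [Fintype Ω] {γ τ : Type} [Fintype γ] [DecidableEq γ]
    [Fintype τ] [DecidableEq τ] {M : ℕ}
    (p : Ω → ℝ) (U : Fin M → Ω → γ) (A : Finset (Fin M)) (S : Ω → τ) : ℝ :=
  ent p (fun ω => ((fun i : {i // i ∈ A} => U i.1 ω), S ω)) - ent p S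

/-- The binned multiple-description region `R*_MD((S,U_1,…,U_M), ({U_j, j∈A}, A ∈ recs))`:
the rate vectors `(R, R')` with `0 ≤ R_i ≤ R'_i`,
`Σ_{i∈A} R'_i ≥ Σ_{i∈A} H(U_i) − H({U_i,i∈A}|S)` for every `A ⊆ {1,…,M}`, and for every
reconstruction set `B ∈ recs` and every `J ⊆ B`,
`Σ_{j∈J}(R'_j − R_j) ≤ Σ_{j∈J} H(U_j) − H({U_j,j∈J} | {U_{j'}, j' ∈ B \ J})`. -/
def RstarMD {Ω γ τ : Type} [Fintype Ω] [Fintype γ] [DecidableEq γ] [Fintype τ] [DecidableEq τ]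
    {M : ℕ} (p : Ω → ℝ) (S : Ω → τ) (U : Fin M → Ω → γ)
    (recs : Finset (Finset (Fin M))) (R R' : Fin M → ℝ) : Prop :=
  (∀ i, 0 ≤ R i ∧ R i ≤ R' i) ∧
  (∀ A : Finset (Fin M), (∑ i ∈ A, ent p (U i)) - jEntCondS p U A S ≤ ∑ i ∈ A, R' i) ∧
  (∀ B ∈ recs, ∀ J ⊆ B,
    ∑ j ∈ J, (R' j - R j) ≤ (∑ j ∈ J, ent p (U j)) - cjEnt p U J (B \ J))

/-- Random variables `(X0,X1,X2,Y1,Y2)` (indexed `0,…,4`) jointly distributed with the pair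
of messages `(V1,V2)` which is uniform on `F_2^t × F_2^t`. -/
structure RVSetup (t : ℕ) where
  Ω : Type
  [fΩ : Fintype Ω]
  p : Ω → ℝ
  p_nonneg : ∀ ω, 0 ≤ p ω
  p_sum : ∑ ω : Ω, p ω = 1
  γ : Type
  [fγ : Fintype γ]
  [dγ : DecidableEq γ]
  V : Ω → Msg t × Msg t
  X : Fin 5 → Ω → γ
  V_unif : ∀ v : Msg t × Msg t, prOf p V v = ((2:ℝ)^(2*t))⁻¹

attribute [instance] RVSetup.fΩ RVSetup.fγ RVSetup.dγ

/-- The four reconstruction sets `{X0,X1,Y1},{X0,X1,Y2},{X0,X2,Y1},{X0,X2,Y2}` with the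
indexing `0 ↦ X0, 1 ↦ X1, 2 ↦ X2, 3 ↦ Y1, 4 ↦ Y2`. -/
def recs5 : Finset (Finset (Fin 5)) := {{0,1,3}, {0,1,4}, {0,2,3}, {0,2,4}}

/-- The inner-bound region `R^{(t)}_in`. -/
def RinMem (t : ℕ) (ab : ℝ × ℝ) : Prop :=
  ∃ S : RVSetup t,
    -- (1) decodability of V1 and V2 from the prescribed triples
    (∃ (f11 f12 f21 f22 : S.γ × S.γ × S.γ → Msg t),
      ∀ ω, S.p ω ≠ 0 →
        (S.V ω).1 = f11 (S.X 0 ω, S.X 1 ω, S.X 3 ω) ∧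
        (S.V ω).1 = f22 (S.X 0 ω, S.X 2 ω, S.X 4 ω) ∧
        (S.V ω).2 = f12 (S.X 0 ω, S.X 1 ω, S.X 4 ω) ∧
        (S.V ω).2 = f21 (S.X 0 ω, S.X 2 ω, S.X 3 ω)) ∧
    -- (2),(3),(4): existence of rates
    (∃ β γr : Fin 5 → ℝ,
      RstarMD S.p S.V S.X recs5 β γr ∧
      ∃ α : Fin 5 → ℝ,
        (∀ i, 0 ≤ α i ∧ α i ≤ β i) ∧
        ((γr 0 - β 0) + (γr 1 - β 1) + (γr 2 - β 2) <
            ent S.p (S.X 0) + ent S.p (S.X 1) + ent S.p (S.X 2)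
              - jEnt S.p S.X {0,1,2} →
          RstarMD S.p S.V ![S.X 0, S.X 1, S.X 2] {(Finset.univ : Finset (Fin 3))}
            ![α 0, α 1, α 2] ![γr 0, γr 1, γr 2]) ∧
        (¬ ((γr 0 - β 0) + (γr 1 - β 1) + (γr 2 - β 2) <
            ent S.p (S.X 0) + ent S.p (S.X 1) + ent S.p (S.X 2)
              - jEnt S.p S.X {0,1,2}) →
          α 0 = β 0 ∧ α 1 = β 1 ∧ α 2 = β 2) ∧
        ((γr 3 - β 3) + (γr 4 - β 4) < mi S.p (S.X 3) (S.X 4) →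
          RstarMD S.p S.V ![S.X 3, S.X 4] {(Finset.univ : Finset (Fin 2))}
            ![α 3, α 4] ![γr 3, γr 4]) ∧
        (¬ ((γr 3 - β 3) + (γr 4 - β 4) < mi S.p (S.X 3) (S.X 4)) →
          α 3 = β 3 ∧ α 4 = β 4) ∧
        2 * t * ab.1 ≥ α 0 + α 1 + α 2 + α 3 + α 4 ∧
        4 * t * ab.2 ≥ 2 * β 0 + β 1 + β 2 + β 3 + β 4)
/-- The inner-bound region `R̃^{(t)}_in` (Corollary 1): the joint distribution
factorizes as `P(V)·P(X0|V)·P(X1|V)·P(X2|V)·P(Y1|V)·P(Y2|V)` (expressed in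
cross-multiplied form), the decodability conditions hold, and the rates are set by
the explicit mutual-information formulas. -/
def RtildeMem (t : ℕ) (ab : ℝ × ℝ) : Prop :=
  ∃ S : RVSetup t,
    -- (1) factorization: X0, X1, X2, Y1, Y2 conditionally independent given (V1,V2)
    (∀ (v : Msg t × Msg t) (x0 x1 x2 y1 y2 : S.γ),
      prOf S.p (fun ω => (S.V ω, S.X 0 ω, S.X 1 ω, S.X 2 ω, S.X 3 ω, S.X 4 ω))
          (v, x0, x1, x2, y1, y2) * (prOf S.p S.V v) ^ 4 =
        prOf S.p (fun ω => (S.V ω, S.X 0 ω)) (v, x0) *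
        prOf S.p (fun ω => (S.V ω, S.X 1 ω)) (v, x1) *
        prOf S.p (fun ω => (S.V ω, S.X 2 ω)) (v, x2) *
        prOf S.p (fun ω => (S.V ω, S.X 3 ω)) (v, y1) *
        prOf S.p (fun ω => (S.V ω, S.X 4 ω)) (v, y2)) ∧
    -- (2) decodability of V1 and V2 from the prescribed triples
    (∃ (f11 f12 f21 f22 : S.γ × S.γ × S.γ → Msg t),
      ∀ ω, S.p ω ≠ 0 →
        (S.V ω).1 = f11 (S.X 0 ω, S.X 1 ω, S.X 3 ω) ∧
        (S.V ω).1 = f22 (S.X 0 ω, S.X 2 ω, S.X 4 ω) ∧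
        (S.V ω).2 = f12 (S.X 0 ω, S.X 1 ω, S.X 4 ω) ∧
        (S.V ω).2 = f21 (S.X 0 ω, S.X 2 ω, S.X 3 ω)) ∧
    -- (3),(4): rates set by the explicit formulas
    (let g0 := mi S.p S.V (S.X 0)
     let g1 := mi S.p S.V (S.X 1)
     let g2 := mi S.p S.V (S.X 2)
     let g3 := mi S.p S.V (S.X 3)
     let g4 := mi S.p S.V (S.X 4)
     let b0 := g0
     let b1 := cmi S.p S.V (S.X 1) (S.X 0)
     let b2 := cmi S.p S.V (S.X 2) (S.X 0)
     let b3 := max (cmi S.p S.V (S.X 3) (fun ω => (S.X 0 ω, S.X 1 ω)))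
                   (cmi S.p S.V (S.X 3) (fun ω => (S.X 0 ω, S.X 2 ω)))
     let b4 := max (cmi S.p S.V (S.X 4) (fun ω => (S.X 0 ω, S.X 1 ω)))
                   (cmi S.p S.V (S.X 4) (fun ω => (S.X 0 ω, S.X 2 ω)))
     let a0 := g0
     ∃ a1 a2 a3 a4 : ℝ,
       ((g0 - b0) + (g1 - b1) + (g2 - b2) <
            ent S.p (S.X 0) + ent S.p (S.X 1) + ent S.p (S.X 2) - jEnt S.p S.X {0,1,2} →
          RstarMD S.p S.V ![S.X 0, S.X 1, S.X 2] {(Finset.univ : Finset (Fin 3))}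
            ![a0, a1, a2] ![g0, g1, g2]) ∧
       (¬ ((g0 - b0) + (g1 - b1) + (g2 - b2) <
            ent S.p (S.X 0) + ent S.p (S.X 1) + ent S.p (S.X 2) - jEnt S.p S.X {0,1,2}) →
          a1 = b1 ∧ a2 = b2) ∧
       ((g3 - b3) + (g4 - b4) < mi S.p (S.X 3) (S.X 4) →
          RstarMD S.p S.V ![S.X 3, S.X 4] {(Finset.univ : Finset (Fin 2))}
            ![a3, a4] ![g3, g4]) ∧
       (¬ ((g3 - b3) + (g4 - b4) < mi S.p (S.X 3) (S.X 4)) →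
          a3 = b3 ∧ a4 = b4) ∧
       2 * t * ab.1 ≥ a0 + a1 + a2 + a3 + a4 ∧
       4 * t * ab.2 ≥ 2 * b0 + b1 + b2 + b3 + b4)

/-!
Consider the typical blocks of `n` copies of the message letter `V` and of the parts `X0, X1, X2`,
`Y1, Y2`, and bin each part at random. By pigeonhole one keeps a set `G` of blocks, large in
exponent, whose first `n H(X_i | V)` bin bits all agree. These bits are common knowledge and cost
nothing, and they pin down every part once the message letters are known; so a block in `G` is its
message block. Because `H(V) + ∑ H(X_i | V) ≤ H(V, X, Y)`, the set `G` contains a fraction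
`2 ^ (-o(n))` of all message blocks, hence `2 ^ (o(n))` of its translates cover all of them: a
message is encoded by a short label naming a translate, which both databases store, and by the
block in `G` of the shifted message. The remaining bin bits are what is stored and returned.

Decoding a set of parts from their bins succeeds under the Slepian–Wolf conditions. For the
answered triples the mutual-information rates are corner points of the Slepian–Wolf polymatroid,
and for the stored parts the conditions are those of `R*_MD`, unless the storage rates equal the
retrieval rates.
-/

section Hashing

variable {I A : Type} {N : ℕ}

/-- For each `i ∈ S`, `x` and `y` have the same first `l i` bits under the bit-valued hash `b i`. -/
def SameBits {X : Type} (b : I → X → ℕ → ZMod 2) (l : I → ℕ) (S : Finset I) (x y : X) : Prop :=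
  ∀ i ∈ S, ∀ k < l i, b i x k = b i y k

theorem SameBits.mono {X : Type} {b : I → X → ℕ → ZMod 2} {l l' : I → ℕ} {S S' : Finset I}
    {x y : X} (h : SameBits b l S x y) (hS : S' ⊆ S) (hl : ∀ i ∈ S', l' i ≤ l i) :
    SameBits b l' S' x y :=
  fun i hi k hk => h i (hS hi) k (hk.trans_le (hl i hi))

theorem SameBits.append {X : Type} {b : I → X → ℕ → ZMod 2} {r m : I → ℕ} {S : Finset I} {x y : X}
    (hr : SameBits b r S x y) (hm : SameBits (fun i x k => b i x (r i + k)) m S x y) :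
    SameBits b (fun i => r i + m i) S x y := by
  intro i hi k (hk : k < r i + m i)
  rcases lt_or_ge k (r i) with hkr | hkr
  · exact hr i hi k hkr
  · obtain ⟨d, rfl⟩ := Nat.exists_eq_add_of_le hkr
    exact hm i hi d (by omega)

/-- The bits of a family of symbol hashes, read off the coordinates of `z`. -/
def coordBits (h : I → A → ℕ → ZMod 2) (i : I) (z : I → A) : ℕ → ZMod 2 := h i (z i)

/-- Extends `N`-bit hashes by zeros, so that their lengths need not appear in types. -/
def zeroExtend (h : I → A → Fin N → ZMod 2) (i : I) (a : A) (k : ℕ) : ZMod 2 :=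
  if hk : k < N then h i a ⟨k, hk⟩ else 0

/-- Under the hash `h`, the sequence `u` cannot be told apart from `z` on `B` by a decoder that
knows the coordinates in `K` and the first `l i` hash bits of the coordinates `i ∈ B`. -/
def Collides (K B : Finset I) (l : I → ℕ) (h : I → A → ℕ → ZMod 2) (z u : I → A) : Prop :=
  Set.EqOn u z K ∧ ¬ Set.EqOn u z B ∧ SameBits (coordBits h) l B u z

/-- The hash `h` determines the coordinates in `B` of any element of `G` from its coordinates in
`K` and its first `l i` hash bits, `i ∈ B`. -/
def Resolves (K B : Finset I) (l : I → ℕ) (h : I → A → ℕ → ZMod 2) (G : Finset (I → A)) : Prop :=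
  ∀ z ∈ G, ∀ u ∈ G, ¬ Collides K B l h z u

theorem Resolves.eqOn {K B : Finset I} {l : I → ℕ} {h : I → A → ℕ → ZMod 2} {G : Finset (I → A)}
    {z u : I → A} (hres : Resolves K B l h G) (hz : z ∈ G) (hu : u ∈ G) (hK : Set.EqOn u z K)
    (hbits : SameBits (coordBits h) l B u z) : Set.EqOn u z B :=
  not_not.mp fun hne => hres z hz u hu ⟨hK, hne, hbits⟩

theorem Collides.congr_right {K B : Finset I} {l : I → ℕ} {h : I → A → ℕ → ZMod 2}
    {z u u' : I → A} (hKB : K ⊆ B) (hu : Set.EqOn u' u B) (hz : Collides K B l h z u) :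
    Collides K B l h z u' := by
  obtain ⟨hK, hB, hbits⟩ := hz
  refine ⟨(hu.mono hKB).trans hK, fun h' => hB (hu.symm.trans h'), fun i hi k hk => ?_⟩
  rw [← hbits i hi k hk, coordBits, coordBits, hu hi]

theorem restrict_eq_restrict_iff {B : Finset I} {u z : I → A} :
    B.restrict u = B.restrict z ↔ Set.EqOn u z B := by
  simp [funext_iff, Set.EqOn]

theorem card_pi_bits [DecidableEq I] (J : Finset I) (l : I → ℕ) :
    Fintype.card ((i : J) → Fin (l i) → ZMod 2) = 2 ^ ∑ i ∈ J, l i := by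
  simp only [Fintype.card_pi, Finset.prod_const, ZMod.card, Finset.card_univ, Fintype.card_fin]
  rw [Finset.prod_pow_eq_pow_sum, Finset.sum_coe_sort J l]

theorem exists_subset_sameBits {X : Type} (b : I → X → ℕ → ZMod 2) (r : I → ℕ) (S : Finset I)
    (G : Finset X) :
    ∃ G' ⊆ G, (G.card : ℝ) ≤ 2 ^ (∑ i ∈ S, r i) * G'.card ∧
      ∀ x ∈ G', ∀ y ∈ G', SameBits b r S x y := by
  classical
  let bits (x : X) (i : S) (k : Fin (r i)) : ZMod 2 := b i x k
  obtain ⟨d, -, hd⟩ := Finset.exists_le_card_fiber_of_nsmul_le_card_of_maps_to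
    (s := G) (t := Finset.univ) (f := bits) (b := (G.card : ℝ) / 2 ^ ∑ i ∈ S, r i)
    (fun _ _ => Finset.mem_univ _) Finset.univ_nonempty (by
      rw [Finset.card_univ, card_pi_bits, nsmul_eq_mul]
      push_cast
      rw [mul_div_cancel₀ _ (by positivity)])
  refine ⟨{x ∈ G | bits x = d}, Finset.filter_subset _ _, ?_, ?_⟩
  · rwa [div_le_iff₀' (by positivity)] at hd
  · intro x hx y hy i hi k hk
    have hxy : bits x = bits y := (Finset.mem_filter.mp hx).2.trans (Finset.mem_filter.mp hy).2.symm
    exact congrFun (congrFun hxy ⟨i, hi⟩) ⟨k, hk⟩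

variable [DecidableEq I] [Fintype I] [Fintype A] [DecidableEq A]

open Classical in
/- The differences of hash bits form a surjective homomorphism, and the event is its kernel. -/
theorem card_sameBits_mul (z u : I → A) (J : Finset I) (l : I → ℕ) (hl : ∀ i ∈ J, l i ≤ N)
    (hne : ∀ i ∈ J, u i ≠ z i) :
    ({h : I → A → Fin N → ZMod 2 | SameBits (coordBits (zeroExtend h)) l J u z} :
        Finset _).card * 2 ^ ∑ i ∈ J, l i = Fintype.card (I → A → Fin N → ZMod 2) := by
  let diff : (I → A → Fin N → ZMod 2) →+ ((i : J) → Fin (l i) → ZMod 2) :=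
    { toFun := fun h i k =>
        h i (u i) (k.castLE (hl i i.2)) - h i (z i) (k.castLE (hl i i.2))
      map_zero' := by ext; simp
      map_add' := fun g h => by ext; simp only [Pi.add_apply]; ring }
  have hker : ∀ h, h ∈ diff.ker ↔ SameBits (coordBits (zeroExtend h)) l J u z := by
    intro h
    simp only [AddMonoidHom.mem_ker, SameBits, coordBits, zeroExtend]
    simp only [diff, AddMonoidHom.coe_mk, ZeroHom.coe_mk, funext_iff, Pi.zero_apply, sub_eq_zero,
      Subtype.forall, Fin.forall_iff, Fin.castLE_mk]
    refine forall₄_congr fun i hi k hk => ?_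
    simp only [hk.trans_le (hl i hi), dif_pos]
  have hsurj : Function.Surjective diff := by
    intro d
    refine ⟨fun i a k => if hi : i ∈ J ∧ a = u i ∧ k.val < l i
      then d ⟨i, hi.1⟩ ⟨k, hi.2.2⟩ else 0, ?_⟩
    ext i k
    simp [diff, (hne i i.2).symm]
  rw [← Fintype.card_subtype, ← card_pi_bits, ← Nat.card_eq_fintype_card,
    ← Nat.card_eq_fintype_card, ← Nat.card_eq_fintype_card,
    ← Nat.card_congr (Equiv.subtypeEquivRight hker), mul_comm,
    ← Nat.card_congr (QuotientAddGroup.quotientKerEquivOfSurjective diff hsurj).toEquiv]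
  exact (AddSubgroup.card_eq_card_quotient_mul_card_addSubgroup diff.ker).symm

/-- The weight under `P` of the sequences that coincide with `z` on `B`. -/
noncomputable def marginal (P : (I → A) → ℝ) (B : Finset I) (z : I → A) : ℝ :=
  prOf P B.restrict (B.restrict z)

open Classical in
theorem marginal_le_sum_collides {P : (I → A) → ℝ} (hP : ∀ z, 0 ≤ P z) {K B : Finset I}
    (hKB : K ⊆ B) {l : I → ℕ} {h : I → A → ℕ → ZMod 2} {z u : I → A}
    (hu : Collides K B l h z u) :
    marginal P B u ≤ ∑ u', if Collides K B l h z u' then P u' else 0 := by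
  refine Finset.sum_le_sum fun u' _ => ?_
  split_ifs with heq hcol hcol
  · rfl
  · exact absurd (hu.congr_right hKB (restrict_eq_restrict_iff.mp heq)) hcol
  · exact hP u'
  · rfl

open Classical in
/- If `u` collides with `z`, then the set `J` on which they differ is a nonempty part of `B \ K`,
and the hash bits over `J` have to agree by chance. -/
theorem card_collides_le (K B : Finset I) (l : I → ℕ) (hl : ∀ i ∈ B, l i ≤ N) (z u : I → A) :
    (({h : I → A → Fin N → ZMod 2 | Collides K B l (zeroExtend h) z u} : Finset _).card : ℝ) ≤
      ∑ J ∈ (B \ K).powerset with J.Nonempty, if (B \ J).restrict u = (B \ J).restrict z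
        then (Fintype.card (I → A → Fin N → ZMod 2) : ℝ) / 2 ^ ∑ i ∈ J, l i else 0 := by
  have hnonneg : ∀ J ∈ ({J ∈ (B \ K).powerset | J.Nonempty} : Finset _),
      0 ≤ if (B \ J).restrict u = (B \ J).restrict z
        then (Fintype.card (I → A → Fin N → ZMod 2) : ℝ) / 2 ^ ∑ i ∈ J, l i else 0 := by
    intro J _
    positivity
  by_cases hu : Set.EqOn u z K ∧ ¬ Set.EqOn u z B
  · let J : Finset I := {i ∈ B | u i ≠ z i}
    have hJB : J ⊆ B := Finset.filter_subset _ _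
    have hJ : J ∈ ({J ∈ (B \ K).powerset | J.Nonempty} : Finset _) := by
      obtain ⟨hK, hB⟩ := hu
      simp only [Set.EqOn, Finset.mem_coe, not_forall] at hK hB
      obtain ⟨i, hiB, hi⟩ := hB
      simp only [Finset.mem_filter, Finset.mem_powerset]
      exact ⟨fun j hj => Finset.mem_sdiff.mpr
        ⟨hJB hj, fun hjK => (Finset.mem_filter.mp hj).2 (hK hjK)⟩,
        i, Finset.mem_filter.mpr ⟨hiB, hi⟩⟩
    have hagree : (B \ J).restrict u = (B \ J).restrict z := by
      rw [restrict_eq_restrict_iff]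
      intro i hi
      simp only [J, Finset.coe_sdiff, Finset.coe_filter, Set.mem_sdiff, Finset.mem_coe,
        Set.mem_ofPred_eq, not_and, not_not] at hi
      exact hi.2 hi.1
    refine le_trans ?_ (Finset.single_le_sum hnonneg hJ)
    rw [if_pos hagree, le_div_iff₀ (by positivity)]
    norm_cast
    rw [← card_sameBits_mul z u J l (fun i hi => hl i (hJB hi))
      fun i hi => (Finset.mem_filter.mp hi).2]
    gcongr with h
    exact fun hcol => hcol.2.2.mono hJB fun _ _ => le_rfl
  · rw [Finset.filter_false_of_mem fun h _ hcol => hu ⟨hcol.1, hcol.2.1⟩, Finset.card_empty,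
      Nat.cast_zero]
    exact Finset.sum_nonneg hnonneg

open Classical in
theorem sum_mul_card_collides_le {P : (I → A) → ℝ} (hP : ∀ z, 0 ≤ P z) (K B : Finset I)
    (l : I → ℕ) (hl : ∀ i ∈ B, l i ≤ N) (z : I → A) :
    ∑ u, P u * (({h : I → A → Fin N → ZMod 2 | Collides K B l (zeroExtend h) z u} :
        Finset _).card : ℝ) ≤
      ∑ J ∈ (B \ K).powerset with J.Nonempty, marginal P (B \ J) z *
        ((Fintype.card (I → A → Fin N → ZMod 2) : ℝ) / 2 ^ ∑ i ∈ J, l i) := by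
  refine (Finset.sum_le_sum fun u _ =>
    mul_le_mul_of_nonneg_left (card_collides_le K B l hl z u) (hP u)).trans_eq ?_
  simp only [Finset.mul_sum, marginal, prOf, Finset.sum_mul]
  rw [Finset.sum_comm]
  simp only [mul_ite, ite_mul, mul_zero, zero_mul]

open Classical in
theorem card_confusable_le {P : (I → A) → ℝ} (hP : ∀ z, 0 ≤ P z) {T : Finset (I → A)}
    {K B : Finset I} (hKB : K ⊆ B) {l : I → ℕ} (hl : ∀ i ∈ B, l i ≤ N) {c lo : ℝ} (hc : 0 ≤ c)
    (hlo : 0 < lo) (hT : ∀ u ∈ T, lo ≤ marginal P B u) {z : I → A}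
    (hz : ∀ J ⊆ B \ K, J.Nonempty → marginal P (B \ J) z ≤ c * lo * 2 ^ ∑ i ∈ J, l i) :
    (({h : I → A → Fin N → ZMod 2 | ∃ u ∈ T, Collides K B l (zeroExtend h) z u} :
        Finset _).card : ℝ) ≤
      2 ^ (B \ K).card * c * (Fintype.card (I → A → Fin N → ZMod 2) : ℝ) := by
  set M : ℝ := (Fintype.card (I → A → Fin N → ZMod 2) : ℝ)
  refine le_of_mul_le_mul_left ?_ hlo
  calc lo * (({h : I → A → Fin N → ZMod 2 | ∃ u ∈ T, Collides K B l (zeroExtend h) z u} :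
          Finset _).card : ℝ)
      = ∑ h : I → A → Fin N → ZMod 2,
          if ∃ u ∈ T, Collides K B l (zeroExtend h) z u then lo else 0 := by
        rw [← Finset.sum_filter, Finset.sum_const, nsmul_eq_mul, mul_comm]
    _ ≤ ∑ h : I → A → Fin N → ZMod 2, ∑ u, if Collides K B l (zeroExtend h) z u
          then P u else 0 := by
        refine Finset.sum_le_sum fun h _ => ?_
        split_ifs with hconf
        · obtain ⟨u, huT, hu⟩ := hconf
          exact (hT u huT).trans (marginal_le_sum_collides hP hKB hu)
        · exact Finset.sum_nonneg fun u _ => ite_nonneg (hP u) le_rfl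
    _ = ∑ u, P u * (({h : I → A → Fin N → ZMod 2 | Collides K B l (zeroExtend h) z u} :
          Finset _).card : ℝ) := by
        rw [Finset.sum_comm]
        refine Finset.sum_congr rfl fun u _ => ?_
        rw [← Finset.sum_filter, Finset.sum_const, nsmul_eq_mul, mul_comm]
    _ ≤ ∑ J ∈ (B \ K).powerset with J.Nonempty, marginal P (B \ J) z *
          (M / 2 ^ ∑ i ∈ J, l i) := sum_mul_card_collides_le hP K B l hl z
    _ ≤ ∑ J ∈ (B \ K).powerset with J.Nonempty, lo * (c * M) := by
        refine Finset.sum_le_sum fun J hJ => ?_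
        obtain ⟨hJB, hne⟩ := Finset.mem_filter.mp hJ
        calc marginal P (B \ J) z * (M / 2 ^ ∑ i ∈ J, l i)
            ≤ c * lo * 2 ^ (∑ i ∈ J, l i) * (M / 2 ^ ∑ i ∈ J, l i) := by
              gcongr
              exact hz J (Finset.mem_powerset.mp hJB) hne
          _ = lo * (c * M) := by field_simp
    _ ≤ 2 ^ (B \ K).card * (lo * (c * M)) := by
        rw [Finset.sum_const, nsmul_eq_mul]
        gcongr
        exact_mod_cast (Finset.card_filter_le _ _).trans_eq (Finset.card_powerset _)
    _ = lo * (2 ^ (B \ K).card * c * M) := by ring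

open Classical in
/- First-moment method: for a random hash, each element of `T` is confusable with another one in
some task with probability at most `1 / 2`. -/
theorem exists_resolving_hash {ι : Type} [Fintype ι] {P : (I → A) → ℝ} (hP : ∀ z, 0 ≤ P z)
    {T : Finset (I → A)} {K B : ι → Finset I} (hKB : ∀ τ, K τ ⊆ B τ) (l : ι → I → ℕ) {c : ℝ}
    (hc : 0 ≤ c) {lo : ι → ℝ} (hlo : ∀ τ, 0 < lo τ) (hT : ∀ τ, ∀ u ∈ T, lo τ ≤ marginal P (B τ) u)
    (hz : ∀ τ, ∀ z ∈ T, ∀ J ⊆ B τ \ K τ, J.Nonempty →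
      marginal P (B τ \ J) z ≤ c * lo τ * 2 ^ ∑ i ∈ J, l τ i)
    (hsum : ∑ τ, 2 ^ (B τ \ K τ).card * c ≤ 1 / 2) :
    ∃ (h : I → A → ℕ → ZMod 2) (G : Finset (I → A)), G ⊆ T ∧ (T.card : ℝ) ≤ 2 * G.card ∧
      ∀ τ, Resolves (K τ) (B τ) (l τ) h G := by
  let N : ℕ := ∑ τ, ∑ i, l τ i
  have hN : ∀ τ, ∀ i ∈ B τ, l τ i ≤ N := fun τ i _ =>
    (Finset.single_le_sum (fun _ _ => Nat.zero_le _) (Finset.mem_univ i)).trans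
      (Finset.single_le_sum (f := fun τ => ∑ i, l τ i) (fun _ _ => Nat.zero_le _)
        (Finset.mem_univ τ))
  let Confusable (τ : ι) (z : I → A) (h : I → A → Fin N → ZMod 2) : Prop :=
    ∃ u ∈ T, Collides (K τ) (B τ) (l τ) (zeroExtend h) z u
  let H : ℝ := Fintype.card (I → A → Fin N → ZMod 2)
  have hmean : ∑ h, (({z ∈ T | ∃ τ, Confusable τ z h} : Finset _).card : ℝ) ≤
      ∑ _h : I → A → Fin N → ZMod 2, (T.card : ℝ) / 2 := by
    calc ∑ h, (({z ∈ T | ∃ τ, Confusable τ z h} : Finset _).card : ℝ)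
        = ∑ z ∈ T, (({h | ∃ τ, Confusable τ z h} : Finset _).card : ℝ) := by
          norm_cast
          exact Finset.sum_card_bipartiteAbove_eq_sum_card_bipartiteBelow _
      _ ≤ ∑ z ∈ T, ∑ τ, 2 ^ (B τ \ K τ).card * c * H := by
          refine Finset.sum_le_sum fun z hzT => ?_
          calc (({h | ∃ τ, Confusable τ z h} : Finset _).card : ℝ)
              ≤ ∑ τ, (({h | Confusable τ z h} : Finset _).card : ℝ) := by
                norm_cast
                convert Finset.card_biUnion_le (s := Finset.univ)
                  (t := fun τ => ({h | Confusable τ z h} : Finset _)) using 2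
                ext h
                simp
            _ ≤ _ := Finset.sum_le_sum fun τ _ =>
                card_confusable_le hP (hKB τ) (hN τ) hc (hlo τ) (hT τ) (hz τ z hzT)
      _ = T.card * ((∑ τ, 2 ^ (B τ \ K τ).card * c) * H) := by
          rw [Finset.sum_const, nsmul_eq_mul, Finset.sum_mul]
      _ ≤ T.card * (1 / 2 * H) := by gcongr
      _ = ∑ _h : I → A → Fin N → ZMod 2, (T.card : ℝ) / 2 := by
          rw [Finset.sum_const, nsmul_eq_mul, Finset.card_univ]
          ring
  obtain ⟨h, -, hh⟩ := Finset.exists_le_of_sum_le Finset.univ_nonempty hmean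
  refine ⟨zeroExtend h, {z ∈ T | ¬ ∃ τ, Confusable τ z h}, Finset.filter_subset _ _, ?_, ?_⟩
  · have hsplit := Finset.card_filter_add_card_filter_not (s := T) fun z => ∃ τ, Confusable τ z h
    rify at hsplit
    linarith
  · intro τ z hzG u huG hcol
    exact (Finset.mem_filter.mp hzG).2 ⟨τ, u, (Finset.mem_filter.mp huG).1, hcol⟩

end Hashing

section Entropy

variable {Ω α β γ : Type} [Fintype Ω] [DecidableEq α] [DecidableEq β] [DecidableEq γ] {p : Ω → ℝ}

theorem prOf_nonneg (hp : ∀ ω, 0 ≤ p ω) (X : Ω → α) (x : α) : 0 ≤ prOf p X x :=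
  Finset.sum_nonneg fun ω _ => ite_nonneg (hp ω) le_rfl

theorem le_prOf_self (hp : ∀ ω, 0 ≤ p ω) (X : Ω → α) (ω : Ω) : p ω ≤ prOf p X (X ω) :=
  (if_pos rfl).symm.trans_le <| Finset.single_le_sum (f := fun ω' => if X ω' = X ω then p ω' else 0)
    (fun ω' _ => ite_nonneg (hp ω') le_rfl) (Finset.mem_univ ω)

theorem sum_prOf_mul [Fintype α] (p : Ω → ℝ) (X : Ω → α) (F : α → ℝ) :
    ∑ x, prOf p X x * F x = ∑ ω, p ω * F (X ω) := by
  simp only [prOf, Finset.sum_mul, ite_mul, zero_mul]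
  rw [Finset.sum_comm]
  simp

theorem sum_prOf [Fintype α] (p : Ω → ℝ) (X : Ω → α) : ∑ x, prOf p X x = ∑ ω, p ω := by
  simpa using sum_prOf_mul p X fun _ => 1

theorem prOf_mem_stdSimplex [Fintype α] (hp : p ∈ stdSimplex ℝ Ω) (X : Ω → α) :
    prOf p X ∈ stdSimplex ℝ α :=
  ⟨prOf_nonneg hp.1 X, (sum_prOf p X).trans hp.2⟩

theorem prOf_prOf [Fintype α] (p : Ω → ℝ) (X : Ω → α) (f : α → β) :
    prOf (prOf p X) f = prOf p (f ∘ X) := by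
  funext b
  simpa [prOf] using sum_prOf_mul p X fun x => if f x = b then 1 else 0

theorem sum_prOf_pair_left [Fintype α] (p : Ω → ℝ) (X : Ω → α) (Y : Ω → β) (y : β) :
    ∑ x, prOf p (fun ω => (X ω, Y ω)) (x, y) = prOf p Y y := by
  simp only [prOf, Prod.mk.injEq, ite_and]
  rw [Finset.sum_comm]
  simp

variable [Fintype α] [Fintype β] [Fintype γ]

theorem ent_eq_sum (p : Ω → ℝ) (X : Ω → α) :
    ent p X = ∑ ω, p ω * -Real.logb 2 (prOf p X (X ω)) := by
  rw [← sum_prOf_mul p X fun x => -Real.logb 2 (prOf p X x), ent]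
  simp only [mul_neg]

theorem ent_congr (p : Ω → ℝ) {X : Ω → α} {Y : Ω → β}
    (h : ∀ ω ω', X ω = X ω' ↔ Y ω = Y ω') : ent p X = ent p Y := by
  simp only [ent_eq_sum, prOf, h]

theorem ent_prOf (p : Ω → ℝ) (X : Ω → α) (f : α → β) : ent (prOf p X) f = ent p (f ∘ X) := by
  rw [ent, ent, prOf_prOf]

theorem ent_const (hp : p ∈ stdSimplex ℝ Ω) (a : α) : ent p (fun _ => a) = 0 := by
  simp [ent_eq_sum, prOf, hp.2]

theorem ent_of_forall_prOf_eq {X : Ω → α} {c : ℝ} (hp : p ∈ stdSimplex ℝ Ω)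
    (h : ∀ x, prOf p X x = c) : ent p X = -Real.logb 2 c := by
  rw [ent_eq_sum]
  simp only [h]
  rw [← Finset.sum_mul, hp.2, one_mul]

/- Jensen's inequality for the logarithm, by the tangent line at `1`. -/
theorem sum_mul_logb_nonpos (hp : p ∈ stdSimplex ℝ Ω) {r : Ω → ℝ} (hr : ∀ ω, 0 < p ω → 0 < r ω)
    (hsum : ∑ ω, p ω * r ω ≤ 1) : ∑ ω, p ω * Real.logb 2 (r ω) ≤ 0 := by
  have hlog : ∀ ω, p ω * Real.log (r ω) ≤ p ω * r ω - p ω := by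
    intro ω
    rcases (hp.1 ω).eq_or_lt with h0 | h0
    · simp [← h0]
    · calc p ω * Real.log (r ω) ≤ p ω * (r ω - 1) := by
            gcongr
            exact Real.log_le_sub_one_of_pos (hr ω h0)
        _ = p ω * r ω - p ω := by ring
  have hsumlog : ∑ ω, p ω * Real.log (r ω) ≤ 0 := by
    refine (Finset.sum_le_sum fun ω _ => hlog ω).trans ?_
    rw [Finset.sum_sub_distrib, hp.2]
    linarith
  simp only [Real.logb, ← mul_div_assoc, ← Finset.sum_div]
  exact div_nonpos_of_nonpos_of_nonneg hsumlog (Real.log_nonneg one_le_two)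

theorem sum_mul_likelihood_ratio_le_one (hp : p ∈ stdSimplex ℝ Ω) (X : Ω → α) (Y : Ω → β)
    (Z : Ω → γ) :
    ∑ ω, p ω * (prOf p (fun ω => (X ω, Z ω)) (X ω, Z ω) * prOf p (fun ω => (Y ω, Z ω)) (Y ω, Z ω) /
      (prOf p (fun ω => (X ω, Y ω, Z ω)) (X ω, Y ω, Z ω) * prOf p Z (Z ω))) ≤ 1 := by
  rw [← sum_prOf_mul p (fun ω => (X ω, Y ω, Z ω)) fun s : α × β × γ =>
    prOf p (fun ω => (X ω, Z ω)) (s.1, s.2.2) * prOf p (fun ω => (Y ω, Z ω)) (s.2.1, s.2.2) /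
      (prOf p (fun ω => (X ω, Y ω, Z ω)) s * prOf p Z s.2.2)]
  calc _ ≤ ∑ s : α × β × γ, prOf p (fun ω => (X ω, Z ω)) (s.1, s.2.2) *
        prOf p (fun ω => (Y ω, Z ω)) (s.2.1, s.2.2) / prOf p Z s.2.2 := by
        refine Finset.sum_le_sum fun s _ => ?_
        have hX := prOf_nonneg hp.1 (fun ω => (X ω, Z ω)) (s.1, s.2.2)
        have hY := prOf_nonneg hp.1 (fun ω => (Y ω, Z ω)) (s.2.1, s.2.2)
        have hZ := prOf_nonneg hp.1 Z s.2.2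
        rcases eq_or_ne (prOf p (fun ω => (X ω, Y ω, Z ω)) s) 0 with h | h
        · rw [h, zero_mul]
          positivity
        · rw [mul_div_mul_comm, ← mul_assoc, ← mul_div_assoc, mul_div_cancel₀ _ h, mul_div_assoc]
    _ = ∑ z, (∑ x, prOf p (fun ω => (X ω, Z ω)) (x, z)) *
        (∑ y, prOf p (fun ω => (Y ω, Z ω)) (y, z)) / prOf p Z z := by
        simp only [Fintype.sum_prod_type, Finset.sum_mul_sum, Finset.sum_div]
        rw [Finset.sum_comm_cycle]
    _ = ∑ z, prOf p Z z := by
        refine Finset.sum_congr rfl fun z _ => ?_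
        rw [sum_prOf_pair_left, sum_prOf_pair_left, mul_self_div_self]
    _ = 1 := (sum_prOf p Z).trans hp.2
    _ ≤ 1 := le_rfl

theorem cmi_nonneg (hp : p ∈ stdSimplex ℝ Ω) (X : Ω → α) (Y : Ω → β) (Z : Ω → γ) :
    0 ≤ cmi p X Y Z := by
  have hpos : ∀ {δ : Type} [DecidableEq δ] (W : Ω → δ) ω, 0 < p ω → 0 < prOf p W (W ω) :=
    fun W ω hω => hω.trans_le (le_prOf_self hp.1 W ω)
  have hratio := sum_mul_logb_nonpos hp (r := fun ω =>
    prOf p (fun ω => (X ω, Z ω)) (X ω, Z ω) * prOf p (fun ω => (Y ω, Z ω)) (Y ω, Z ω) /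
      (prOf p (fun ω => (X ω, Y ω, Z ω)) (X ω, Y ω, Z ω) * prOf p Z (Z ω)))
    (fun ω hω => div_pos (mul_pos (hpos (fun ω => (X ω, Z ω)) ω hω)
      (hpos (fun ω => (Y ω, Z ω)) ω hω)) (mul_pos (hpos (fun ω => (X ω, Y ω, Z ω)) ω hω)
      (hpos Z ω hω))) (sum_mul_likelihood_ratio_le_one hp X Y Z)
  refine (neg_nonneg.mpr hratio).trans_eq ?_
  rw [cmi, ent_eq_sum, ent_eq_sum, ent_eq_sum, ent_eq_sum, ← Finset.sum_add_distrib,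
    ← Finset.sum_sub_distrib, ← Finset.sum_sub_distrib, ← Finset.sum_neg_distrib]
  refine Finset.sum_congr rfl fun ω _ => ?_
  rcases (hp.1 ω).eq_or_lt with h0 | h0
  · simp [← h0]
  · have hX := (hpos (fun ω => (X ω, Z ω)) ω h0).ne'
    have hY := (hpos (fun ω => (Y ω, Z ω)) ω h0).ne'
    have hXY := (hpos (fun ω => (X ω, Y ω, Z ω)) ω h0).ne'
    have hZ := (hpos Z ω h0).ne'
    rw [Real.logb_div (mul_ne_zero hX hY) (mul_ne_zero hXY hZ), Real.logb_mul hX hY,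
      Real.logb_mul hXY hZ]
    ring

theorem mi_nonneg (hp : p ∈ stdSimplex ℝ Ω) (X : Ω → α) (Y : Ω → β) : 0 ≤ mi p X Y := by
  have h := cmi_nonneg hp X Y fun _ => ()
  rwa [cmi, ent_const hp, sub_zero, ent_congr p (X := fun ω => (X ω, ())) (Y := X) (by simp),
    ent_congr p (X := fun ω => (Y ω, ())) (Y := Y) (by simp),
    ent_congr p (X := fun ω => (X ω, Y ω, ())) (Y := fun ω => (X ω, Y ω)) (by simp)] at h

end Entropy

section WeakLaw

variable {Z : Type} [Fintype Z] {q : Z → ℝ}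

open MeasureTheory ProbabilityTheory in
theorem sum_prod_deviation_le (hq : q ∈ stdSimplex ℝ Z) (g : Z → ℝ) (n : ℕ) {c : ℝ} (hc : 0 < c) :
    ∑ z : Fin n → Z with c ≤ |∑ j, g (z j) - n * ∑ y, q y * g y|, ∏ j, q (z j) ≤
      n * (∑ y, q y * (g y - ∑ y', q y' * g y') ^ 2) / c ^ 2 := by
  let _ : MeasurableSpace Z := ⊤
  let law : PMF Z := PMF.ofFintype (fun z => ENNReal.ofReal (q z)) (by
    rw [← ENNReal.ofReal_sum_of_nonneg fun z _ => hq.1 z, hq.2, ENNReal.ofReal_one])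
  let μ : Measure Z := law.toMeasure
  let ν : Measure (Fin n → Z) := Measure.pi fun _ => μ
  have hsingleton : ∀ z, μ.real {z} = q z := fun z => by
    rw [measureReal_def, PMF.toMeasure_apply_singleton _ _ (MeasurableSet.singleton z)]
    exact ENNReal.toReal_ofReal (hq.1 z)
  have hmean : ∀ f : Z → ℝ, ∫ y, f y ∂μ = ∑ y, q y * f y := fun f => by
    simp only [integral_fintype .of_finite, hsingleton, smul_eq_mul]
  have hsum : ∫ z, ∑ j, g (z j) ∂ν = n * ∑ y, q y * g y := by
    rw [integral_finsetSum _ fun _ _ => .of_finite]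
    simp [ν, integral_comp_eval (μ := fun _ : Fin n => μ) .of_discrete, hmean]
  have hvar : Var[fun z => ∑ j, g (z j); ν] =
      n * ∑ y, q y * (g y - ∑ y', q y' * g y') ^ 2 := by
    have h := variance_sum_pi (μ := fun _ : Fin n => μ) (X := fun _ => g) fun _ => .of_discrete
    simp only [variance_eq_integral (.of_discrete : AEMeasurable g μ), hmean, Finset.sum_const,
      Finset.card_univ, Fintype.card_fin, nsmul_eq_mul] at h
    rw [← h]
    congr
    ext z
    simp
  have hcheb := meas_ge_le_variance_div_sq (μ := ν) (X := fun z => ∑ j, g (z j)) .of_discrete hc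
  rw [hsum, hvar] at hcheb
  refine le_trans (le_of_eq ?_) (ENNReal.toReal_le_of_le_ofReal ?_ hcheb)
  · rw [← measureReal_def, ← Finset.coe_filter_univ, ← sum_measureReal_singleton]
    refine Finset.sum_congr rfl fun z _ => ?_
    rw [measureReal_def, Measure.pi_singleton, ENNReal.toReal_prod]
    exact Finset.prod_congr rfl fun j _ => (hsingleton (z j)).symm
  · exact div_nonneg (mul_nonneg n.cast_nonneg <| Finset.sum_nonneg fun y _ =>
      mul_nonneg (hq.1 y) (sq_nonneg _)) (sq_nonneg c)

open Filter in
theorem eventually_sum_prod_deviation_le (hq : q ∈ stdSimplex ℝ Z) (g : Z → ℝ) {δ η : ℝ}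
    (hδ : 0 < δ) (hη : 0 < η) :
    ∀ᶠ n : ℕ in atTop,
      ∑ z : Fin n → Z with n * δ ≤ |∑ j, g (z j) - n * ∑ y, q y * g y|, ∏ j, q (z j) ≤ η := by
  set v : ℝ := ∑ y, q y * (g y - ∑ y', q y' * g y') ^ 2
  have hlim : Tendsto (fun n : ℕ => v / δ ^ 2 / n) atTop (nhds 0) :=
    tendsto_const_div_atTop_nhds_zero_nat _
  filter_upwards [hlim.eventually_le_const hη, eventually_gt_atTop 0] with n hn hpos
  have : (0 : ℝ) < n := Nat.cast_pos.mpr hpos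
  calc _ ≤ n * v / (n * δ) ^ 2 := sum_prod_deviation_le hq g n (by positivity)
    _ = v / δ ^ 2 / n := by field_simp
    _ ≤ η := hn

end WeakLaw

section Typicality

variable {I Γ : Type} [Fintype I] [DecidableEq I] [Fintype Γ] {q : (I → Γ) → ℝ}

/-- The joint law of `n` independent copies of a family with law `q`; a coordinate of the outcome
is a sequence of length `n`. -/
def productLaw (q : (I → Γ) → ℝ) (n : ℕ) (z : I → Fin n → Γ) : ℝ := ∏ j, q fun i => z i j

theorem sum_productLaw_eq (q : (I → Γ) → ℝ) (n : ℕ) (F : (I → Fin n → Γ) → ℝ) :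
    ∑ z, productLaw q n z * F z =
      ∑ y : Fin n → I → Γ, (∏ j, q (y j)) * F fun i j => y j i :=
  (Equiv.piComm fun (_ : I) (_ : Fin n) => Γ).sum_comp fun y => (∏ j, q (y j)) * F fun i j => y j i

theorem productLaw_mem_stdSimplex (hq : q ∈ stdSimplex ℝ (I → Γ)) (n : ℕ) :
    productLaw q n ∈ stdSimplex ℝ (I → Fin n → Γ) := by
  refine ⟨fun z => Finset.prod_nonneg fun j _ => hq.1 _, ?_⟩
  have h := sum_productLaw_eq q n fun _ => 1
  simp only [mul_one] at h
  rw [h, ← Fintype.piFinset_univ, ← Finset.prod_univ_sum]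
  simp [hq.2]

variable [DecidableEq Γ]

theorem marginal_pos (hq : ∀ y, 0 ≤ q y) (B : Finset I) {y : I → Γ} (hy : 0 < q y) :
    0 < marginal q B y :=
  hy.trans_le (le_prOf_self hq _ y)

theorem marginal_univ (q : (I → Γ) → ℝ) (y : I → Γ) : marginal q Finset.univ y = q y := by
  simp [marginal, prOf, restrict_eq_restrict_iff]

/-- The joint entropy of the coordinates in `B` under the law `q`. -/
noncomputable def coordEnt (q : (I → Γ) → ℝ) (B : Finset I) : ℝ := ent q B.restrict

theorem coordEnt_eq_sum (q : (I → Γ) → ℝ) (B : Finset I) :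
    coordEnt q B = ∑ y, q y * -Real.logb 2 (marginal q B y) :=
  ent_eq_sum q B.restrict

theorem marginal_productLaw (q : (I → Γ) → ℝ) (n : ℕ) (B : Finset I) (z : I → Fin n → Γ) :
    marginal (productLaw q n) B z = ∏ j, marginal q B fun i => z i j := by
  have hcoord : ∀ y : Fin n → I → Γ, B.restrict (fun i j => y j i) = B.restrict z ↔
      ∀ j, B.restrict (y j) = B.restrict fun i => z i j := by
    intro y
    simp only [restrict_eq_restrict_iff]
    exact ⟨fun h j i hi => congrFun (h hi) j, fun h i hi => funext fun j => h j hi⟩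
  have h := sum_productLaw_eq q n fun u => if B.restrict u = B.restrict z then 1 else 0
  simp only [mul_ite, mul_one, mul_zero] at h
  rw [marginal, prOf, h]
  simp only [marginal, prOf, Finset.prod_univ_sum, Fintype.piFinset_univ, Fintype.prod_ite_zero]
  refine Finset.sum_congr rfl fun y _ => ?_
  convert if_congr (hcoord y) rfl rfl

open Classical in
/-- The sequences whose empirical entropy is within `δ` of `coordEnt q B` for every set `B` of
coordinates, and all of whose letters have positive probability. -/
noncomputable def typicalSet (q : (I → Γ) → ℝ) (n : ℕ) (δ : ℝ) : Finset (I → Fin n → Γ) :=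
  {z | (∀ j, 0 < q fun i => z i j) ∧
    ∀ B, |∑ j, -Real.logb 2 (marginal q B fun i => z i j) - n * coordEnt q B| < n * δ}

variable {n : ℕ} {δ : ℝ} {z : I → Fin n → Γ}

theorem mem_typicalSet : z ∈ typicalSet q n δ ↔ (∀ j, 0 < q fun i => z i j) ∧
    ∀ B, |∑ j, -Real.logb 2 (marginal q B fun i => z i j) - n * coordEnt q B| < n * δ := by
  simp [typicalSet]

theorem marginal_productLaw_eq_rpow (hq : ∀ y, 0 ≤ q y) (B : Finset I)
    (hz : ∀ j, 0 < q fun i => z i j) :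
    marginal (productLaw q n) B z =
      2 ^ (-∑ j, -Real.logb 2 (marginal q B fun i => z i j)) := by
  rw [marginal_productLaw, ← Finset.sum_neg_distrib, Real.rpow_sum_of_pos two_pos]
  refine Finset.prod_congr rfl fun j _ => ?_
  rw [neg_neg, Real.rpow_logb two_pos one_lt_two.ne' (marginal_pos hq B (hz j))]

theorem le_marginal_of_mem_typicalSet (hq : ∀ y, 0 ≤ q y) (hz : z ∈ typicalSet q n δ)
    (B : Finset I) : (2 : ℝ) ^ (-(n * (coordEnt q B + δ))) ≤ marginal (productLaw q n) B z := by
  obtain ⟨hpos, hdev⟩ := mem_typicalSet.mp hz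
  rw [marginal_productLaw_eq_rpow hq B hpos]
  gcongr
  · exact one_le_two
  · linarith [(abs_lt.mp (hdev B)).2]

theorem marginal_le_of_mem_typicalSet (hq : ∀ y, 0 ≤ q y) (hz : z ∈ typicalSet q n δ)
    (B : Finset I) : marginal (productLaw q n) B z ≤ (2 : ℝ) ^ (-(n * (coordEnt q B - δ))) := by
  obtain ⟨hpos, hdev⟩ := mem_typicalSet.mp hz
  rw [marginal_productLaw_eq_rpow hq B hpos]
  gcongr
  · exact one_le_two
  · linarith [(abs_lt.mp (hdev B)).1]

theorem sum_compl_typicalSet_le (hq : q ∈ stdSimplex ℝ (I → Γ)) (n : ℕ) (δ : ℝ) :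
    ∑ z ∈ (typicalSet q n δ)ᶜ, productLaw q n z ≤
      ∑ B : Finset I, ∑ y : Fin n → I → Γ with n * δ ≤
        |∑ j, -Real.logb 2 (marginal q B (y j)) - n * coordEnt q B|, ∏ j, q (y j) := by
  classical
  have hlaw := (productLaw_mem_stdSimplex hq n).1
  have hswap : ∀ B : Finset I, (∑ y : Fin n → I → Γ with n * δ ≤
        |∑ j, -Real.logb 2 (marginal q B (y j)) - n * coordEnt q B|, ∏ j, q (y j)) =
      ∑ z : I → Fin n → Γ, if n * δ ≤
        |∑ j, -Real.logb 2 (marginal q B fun i => z i j) - n * coordEnt q B|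
        then productLaw q n z else 0 := by
    intro B
    have h := sum_productLaw_eq q n fun z => if n * δ ≤
      |∑ j, -Real.logb 2 (marginal q B fun i => z i j) - n * coordEnt q B| then 1 else 0
    simp only [mul_ite, mul_one, mul_zero] at h
    rw [Finset.sum_filter, h]
  simp only [hswap]
  rw [Finset.sum_comm]
  refine (Finset.sum_le_sum fun z hz => ?_).trans (Finset.sum_le_univ_sum_of_nonneg fun z =>
    Finset.sum_nonneg fun B _ => ite_nonneg (hlaw z) le_rfl)
  rw [Finset.mem_compl, mem_typicalSet, not_and_or] at hz
  rcases hz with hz | hz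
  · obtain ⟨j, hj⟩ := not_forall.mp hz
    have hzero : productLaw q n z = 0 :=
      Finset.prod_eq_zero (Finset.mem_univ j) (le_antisymm (not_lt.mp hj) (hq.1 _))
    simp [hzero]
  · obtain ⟨B, hB⟩ := not_forall.mp hz
    refine le_trans (if_pos (not_lt.mp hB)).ge (Finset.single_le_sum (f := fun B => if n * δ ≤
      |∑ j, -Real.logb 2 (marginal q B fun i => z i j) - n * coordEnt q B|
      then productLaw q n z else 0) (fun B _ => ite_nonneg (hlaw z) le_rfl) (Finset.mem_univ B))

open Filter in
theorem eventually_card_typicalSet_ge (hq : q ∈ stdSimplex ℝ (I → Γ)) (hδ : 0 < δ) :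
    ∀ᶠ n : ℕ in atTop,
      (2 : ℝ) ^ (n * (coordEnt q Finset.univ - δ)) / 2 ≤ (typicalSet q n δ).card := by
  have hdev := eventually_all.mpr fun B : Finset I => eventually_sum_prod_deviation_le hq
    (fun y => -Real.logb 2 (marginal q B y)) hδ
    (η := (2 * Fintype.card (Finset I) : ℝ)⁻¹) (by positivity)
  filter_upwards [hdev] with n hn
  simp only [← coordEnt_eq_sum] at hn
  have hcompl : ∑ z ∈ (typicalSet q n δ)ᶜ, productLaw q n z ≤ 1 / 2 := by
    refine (sum_compl_typicalSet_le hq n δ).trans ((Finset.sum_le_sum fun B _ => hn B).trans_eq ?_)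
    rw [Finset.sum_const, nsmul_eq_mul, Finset.card_univ]
    field_simp
  have htotal := Finset.sum_add_sum_compl (typicalSet q n δ) (productLaw q n)
  rw [(productLaw_mem_stdSimplex hq n).2] at htotal
  have hmass : ∑ z ∈ typicalSet q n δ, productLaw q n z ≤
      (typicalSet q n δ).card * (2 : ℝ) ^ (-(n * (coordEnt q Finset.univ - δ))) := by
    rw [← nsmul_eq_mul]
    refine Finset.sum_le_card_nsmul _ _ _ fun z hz => ?_
    exact (marginal_univ _ z).ge.trans (marginal_le_of_mem_typicalSet hq.1 hz Finset.univ)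
  rw [Real.rpow_neg two_pos.le, ← div_eq_mul_inv] at hmass
  have hhalf := le_trans (by linarith : (1 / 2 : ℝ) ≤ _) hmass
  rw [le_div_iff₀ (by positivity)] at hhalf
  linarith

end Typicality

section SlepianWolf

variable {I Γ : Type} [Fintype I] [DecidableEq I] [Fintype Γ] [DecidableEq Γ] {q : (I → Γ) → ℝ}

theorem coordEnt_empty (hq : q ∈ stdSimplex ℝ (I → Γ)) : coordEnt q ∅ = 0 :=
  (ent_congr q fun _ _ => by simp [Finset.restrict, funext_iff]).trans
    (ent_const hq ())

theorem coordEnt_union_add_le (hq : q ∈ stdSimplex ℝ (I → Γ)) (A B C : Finset I) :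
    coordEnt q (A ∪ B ∪ C) + coordEnt q C ≤ coordEnt q (A ∪ C) + coordEnt q (B ∪ C) := by
  have hpair : ∀ S T : Finset I,
      ent q (fun y => (S.restrict y, T.restrict y)) = coordEnt q (S ∪ T) := fun S T =>
    ent_congr q fun y y' => by
      simp only [Prod.mk.injEq, restrict_eq_restrict_iff, Finset.coe_union, Set.eqOn_union]
  have htriple : ent q (fun y => (A.restrict y, B.restrict y, C.restrict y)) =
      coordEnt q (A ∪ B ∪ C) :=
    ent_congr q fun y y' => by
      simp only [Prod.mk.injEq, restrict_eq_restrict_iff, Finset.coe_union, Set.eqOn_union,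
        and_assoc]
  have h := cmi_nonneg hq A.restrict B.restrict C.restrict
  rw [cmi, hpair, hpair, htriple, ← coordEnt] at h
  linarith

theorem coordEnt_insert_sub_le (hq : q ∈ stdSimplex ℝ (I → Γ)) {B C : Finset I} (hBC : B ⊆ C)
    (i : I) : coordEnt q (insert i C) - coordEnt q C ≤ coordEnt q (insert i B) - coordEnt q B := by
  have h := coordEnt_union_add_le hq {i} C B
  rw [Finset.union_assoc, Finset.union_eq_left.mpr hBC] at h
  simp only [← Finset.insert_eq] at h
  linarith

/-- The conditional entropy of the coordinate `i` given the coordinate `v`. -/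
noncomputable def condCoordEnt (q : (I → Γ) → ℝ) (v i : I) : ℝ :=
  coordEnt q {v, i} - coordEnt q {v}

theorem condCoordEnt_nonneg (hq : q ∈ stdSimplex ℝ (I → Γ)) (v i : I) :
    0 ≤ condCoordEnt q v i := by
  have h := coordEnt_union_add_le hq {i} {i} {v}
  rw [Finset.union_self, ← Finset.insert_eq, Finset.pair_comm] at h
  rw [condCoordEnt]
  linarith

/-- The Slepian–Wolf conditions: binning each coordinate `i ∈ B` at rate `e i` lets a decoder that
knows the coordinates in `K` recover all the coordinates in `B`. -/
def SlepianWolf (q : (I → Γ) → ℝ) (K B : Finset I) (e : I → ℝ) : Prop :=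
  ∀ J ⊆ B \ K, coordEnt q B - coordEnt q (B \ J) ≤ ∑ i ∈ J, e i

theorem SlepianWolf.refl (q : (I → Γ) → ℝ) (K : Finset I) (e : I → ℝ) : SlepianWolf q K K e := by
  intro J hJ
  rw [Finset.sdiff_self, Finset.subset_empty] at hJ
  simp [hJ]

/- Corner points: the chain rule bounds the new coordinate, submodularity the old ones. -/
theorem SlepianWolf.insert_coord (hq : q ∈ stdSimplex ℝ (I → Γ)) {K B : Finset I} {e : I → ℝ}
    (h : SlepianWolf q K B e) {i : I} (hi : i ∉ B)
    (he : coordEnt q (insert i B) - coordEnt q B ≤ e i) : SlepianWolf q K (insert i B) e := by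
  intro J hJ
  by_cases hiJ : i ∈ J
  · obtain ⟨J, hiJ', rfl⟩ : ∃ J', i ∉ J' ∧ insert i J' = J :=
      ⟨J.erase i, Finset.notMem_erase i J, Finset.insert_erase hiJ⟩
    have hJB : J ⊆ B \ K := fun j hj => by
      have hj' := hJ (Finset.mem_insert_of_mem hj)
      simp only [Finset.mem_sdiff, Finset.mem_insert] at hj' ⊢
      exact ⟨hj'.1.resolve_left (ne_of_mem_of_not_mem hj hiJ'), hj'.2⟩
    have hsdiff : insert i B \ insert i J = B \ J := by
      rw [Finset.insert_sdiff_insert, Finset.sdiff_insert_of_notMem hi]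
    rw [hsdiff, Finset.sum_insert hiJ']
    linarith [h J hJB]
  · have hJB : J ⊆ B \ K := fun j hj => by
      have hj' := hJ hj
      simp only [Finset.mem_sdiff, Finset.mem_insert] at hj' ⊢
      exact ⟨hj'.1.resolve_left (ne_of_mem_of_not_mem hj hiJ), hj'.2⟩
    rw [Finset.insert_sdiff_of_notMem _ hiJ]
    linarith [h J hJB, coordEnt_insert_sub_le hq (Finset.sdiff_subset (s := B) (t := J)) i]

theorem slepianWolf_condCoordEnt (hq : q ∈ stdSimplex ℝ (I → Γ)) (v : I) :
    SlepianWolf q {v} Finset.univ (condCoordEnt q v) := by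
  have hinsert : ∀ S : Finset I, SlepianWolf q {v} (insert v S) (condCoordEnt q v) := by
    intro S
    induction S using Finset.induction with
    | empty => exact SlepianWolf.refl q {v} _
    | insert i S _ ih =>
      rw [Finset.insert_comm]
      by_cases hi : i ∈ insert v S
      · rwa [Finset.insert_eq_of_mem hi]
      · refine ih.insert_coord hq hi ?_
        rw [condCoordEnt, Finset.pair_comm]
        exact coordEnt_insert_sub_le hq (by simp) i
  simpa using hinsert Finset.univ

end SlepianWolf

section Binning

variable {I Γ : Type} [Fintype I] [DecidableEq I] [Fintype Γ] [DecidableEq Γ] {q : (I → Γ) → ℝ}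

open Filter

theorem tendsto_two_rpow_neg_mul {δ : ℝ} (hδ : 0 < δ) :
    Tendsto (fun n : ℕ => (2 : ℝ) ^ (-(n * δ))) atTop (nhds 0) :=
  (tendsto_rpow_atBot_of_base_gt_one 2 one_lt_two).comp
    (tendsto_neg_atTop_atBot.comp (tendsto_natCast_atTop_atTop.atTop_mul_const hδ))

theorem marginal_sdiff_le_of_slepianWolf (hq : ∀ y, 0 ≤ q y) {K B J : Finset I} {e : I → ℝ}
    (hSW : SlepianWolf q K B e) {n : ℕ} {δ : ℝ} (hδ : 0 ≤ δ) {l : I → ℕ}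
    (hl : ∀ i ∈ B \ K, n * (e i + 3 * δ) ≤ l i) {z : I → Fin n → Γ} (hz : z ∈ typicalSet q n δ)
    (hJB : J ⊆ B \ K) (hJ : J.Nonempty) :
    marginal (productLaw q n) (B \ J) z ≤
      2 ^ (-(n * δ)) * 2 ^ (-(n * (coordEnt q B + δ))) * 2 ^ ∑ i ∈ J, l i := by
  refine (marginal_le_of_mem_typicalSet hq hz _).trans ?_
  rw [← Real.rpow_natCast, ← Real.rpow_add two_pos, ← Real.rpow_add two_pos]
  refine Real.rpow_le_rpow_of_exponent_le one_le_two ?_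
  have hcard : (1 : ℝ) ≤ J.card := mod_cast hJ.card_pos
  have hsum : n * (∑ i ∈ J, e i + J.card * (3 * δ)) ≤ ((∑ i ∈ J, l i : ℕ) : ℝ) := by
    rw [Nat.cast_sum, ← nsmul_eq_mul (J.card), ← Finset.sum_const, ← Finset.sum_add_distrib,
      Finset.mul_sum]
    exact Finset.sum_le_sum fun i hi => hl i (hJB hi)
  have hrate : n * (coordEnt q B - coordEnt q (B \ J) + 3 * δ) ≤
      n * (∑ i ∈ J, e i + J.card * (3 * δ)) := by
    refine mul_le_mul_of_nonneg_left (add_le_add (hSW J hJB) ?_) n.cast_nonneg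
    exact le_mul_of_one_le_left (by positivity) hcard
  linarith

open Classical in
theorem eventually_exists_binning {ι : Type} [Finite ι] (hq : q ∈ stdSimplex ℝ (I → Γ))
    (e : ι → I → ℝ) {δ : ℝ} (hδ : 0 < δ) :
    ∀ᶠ n : ℕ in atTop, ∀ l : ι → I → ℕ, (∀ τ i, n * (e τ i + 3 * δ) ≤ l τ i) → ∀ r : I → ℕ,
      ∃ (h : I → (Fin n → Γ) → ℕ → ZMod 2) (G : Finset (I → Fin n → Γ)),
        (∀ z ∈ G, ∀ j, 0 < q fun i => z i j) ∧
        (2 : ℝ) ^ (n * (coordEnt q Finset.univ - δ)) ≤ 4 * 2 ^ (∑ i, r i) * G.card ∧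
        (∀ z ∈ G, ∀ u ∈ G, SameBits (coordBits h) r Finset.univ z u) ∧
        ∀ τ K B, K ⊆ B → SlepianWolf q K B (e τ) → Resolves K B (l τ) h G := by
  have := Fintype.ofFinite ι
  let Task : Type := {x : ι × Finset I × Finset I //
    x.2.1 ⊆ x.2.2 ∧ SlepianWolf q x.2.1 x.2.2 (e x.1)}
  have hlim := tendsto_finsetSum Finset.univ fun (x : Task) (_ : x ∈ Finset.univ) =>
    (tendsto_two_rpow_neg_mul hδ).const_mul ((2 : ℝ) ^ (x.1.2.2 \ x.1.2.1).card)
  simp only [mul_zero, Finset.sum_const_zero] at hlim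
  filter_upwards [eventually_card_typicalSet_ge hq hδ, hlim.eventually_le_const one_half_pos]
    with n hcard hsmall l hl r
  obtain ⟨h, G, hGT, hG, hres⟩ := exists_resolving_hash (productLaw_mem_stdSimplex hq n).1
    (fun x : Task => x.2.1) (fun x => l x.1.1) (by positivity) (fun x => by positivity)
    (fun x u hu => le_marginal_of_mem_typicalSet hq.1 hu x.1.2.2)
    (fun x z hz J hJB hJ =>
      marginal_sdiff_le_of_slepianWolf hq.1 x.2.2 hδ.le (fun i _ => hl x.1.1 i) hz hJB hJ) hsmall
  obtain ⟨G', hG'G, hG', hsame⟩ := exists_subset_sameBits (coordBits h) r Finset.univ G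
  refine ⟨h, G', fun z hz => (mem_typicalSet.mp (hGT (hG'G hz))).1, by linarith, hsame,
    fun τ K B hKB hSW z hz u hu => hres ⟨(τ, K, B), hKB, hSW⟩ z (hG'G hz) u (hG'G hu)⟩

end Binning

section Covering

open Classical in
theorem card_translates_avoiding {W : Type} [AddCommGroup W] [Fintype W] (G : Finset W) (m : ℕ)
    (w : W) :
    ({s : Fin m → W | ∀ j, w - s j ∉ G} : Finset _).card =
      (Fintype.card W - G.card) ^ m := by
  have hpi : ({s : Fin m → W | ∀ j, w - s j ∉ G} : Finset _) =
      Fintype.piFinset fun _ => Gᶜ.map (Equiv.subLeft w).toEmbedding := by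
    ext s
    simp [Finset.mem_map_equiv, neg_add_eq_sub]
  rw [hpi, Fintype.card_piFinset_const, Finset.card_map, Finset.card_compl]

theorem card_mul_pow_lt_pow {M g : ℝ} {m : ℕ} (hM : 0 < M) (hg : g ≤ M)
    (hm : M * Real.log M < g * m) : M * (M - g) ^ m < M ^ m := by
  have hbase : M - g ≤ M * Real.exp (-(g / M)) := by
    have h := mul_le_mul_of_nonneg_left (Real.one_sub_le_exp_neg (g / M)) hM.le
    rwa [mul_sub, mul_one, mul_div_cancel₀ _ hM.ne'] at h
  have hexp : Real.log M < m * (g / M) := by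
    rw [mul_div_assoc', lt_div_iff₀ hM]
    linarith
  calc M * (M - g) ^ m ≤ M * (M * Real.exp (-(g / M))) ^ m := by
        gcongr
    _ = M ^ m * (Real.exp (Real.log M) * Real.exp (m * -(g / M))) := by
        rw [Real.exp_log hM, Real.exp_nat_mul]
        ring
    _ < M ^ m * 1 := by
        gcongr
        rw [← Real.exp_add, Real.exp_lt_one_iff]
        linarith
    _ = M ^ m := mul_one _

open Classical in
/- For random translates, the expected number of uncovered elements is less than one. -/
theorem exists_translates_cover {W : Type} [AddCommGroup W] [Fintype W] (G : Finset W) {m : ℕ}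
    (hm : Fintype.card W * Real.log (Fintype.card W) < G.card * m) :
    ∃ s : Fin m → W, ∀ w, ∃ j, w - s j ∈ G := by
  have hle : G.card ≤ Fintype.card W := Finset.card_le_univ G
  have hlt : Fintype.card W * (Fintype.card W - G.card) ^ m < Fintype.card W ^ m := by
    have h := card_mul_pow_lt_pow (Nat.cast_pos.mpr Fintype.card_pos) (Nat.cast_le.mpr hle) hm
    rw [← Nat.cast_sub hle] at h
    exact_mod_cast h
  have hcount : ∑ s : Fin m → W, ({w | ∀ j, w - s j ∉ G} : Finset W).card <
      ∑ _s : Fin m → W, 1 :=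
    calc ∑ s : Fin m → W, ({w | ∀ j, w - s j ∉ G} : Finset W).card
        = ∑ w : W, ({s : Fin m → W | ∀ j, w - s j ∉ G} : Finset _).card := by
          simp only [Finset.card_filter]
          exact Finset.sum_comm
      _ = Fintype.card W * (Fintype.card W - G.card) ^ m := by
          rw [Finset.sum_congr rfl fun w _ => card_translates_avoiding G m w,
            Finset.sum_const, Finset.card_univ, smul_eq_mul]
      _ < ∑ _s : Fin m → W, 1 := by
          rw [Finset.sum_const, Finset.card_univ, smul_eq_mul, mul_one, Fintype.card_pi_const]
          exact hlt
  obtain ⟨s, -, hs⟩ := Finset.exists_lt_of_sum_lt hcount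
  refine ⟨s, fun w => ?_⟩
  have hempty := Finset.card_eq_zero.mp (Nat.lt_one_iff.mp hs)
  have hw := Finset.filter_eq_empty_iff.mp hempty (Finset.mem_univ w)
  simpa using hw

theorem eventually_mul_lt_two_rpow (C c : ℝ) {δ : ℝ} (hδ : 0 < δ) :
    ∀ᶠ n : ℕ in Filter.atTop, C * n < (2 : ℝ) ^ (n * δ - c) := by
  have hlim := (tendsto_pow_const_div_const_pow_of_one_lt 1
    (Real.one_lt_rpow one_lt_two hδ)).const_mul (C * 2 ^ c)
  rw [mul_zero] at hlim
  filter_upwards [hlim.eventually_lt_const one_pos] with n hn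
  rw [pow_one, mul_div_assoc', div_lt_one (by positivity)] at hn
  rw [Real.rpow_sub two_pos, mul_comm (n : ℝ), Real.rpow_mul two_pos.le, Real.rpow_natCast,
    lt_div_iff₀ (by positivity)]
  linarith

theorem mul_log_lt_mul_two_pow {N ρ κ : ℕ} {x g : ℝ} (hg : (2 : ℝ) ^ x ≤ 4 * 2 ^ ρ * g)
    (hN : N * Real.log 2 < (2 : ℝ) ^ (x + κ - ρ - 2 - N)) :
    (2 : ℝ) ^ N * Real.log (2 ^ N) < g * 2 ^ κ := by
  rw [Real.log_pow]
  calc (2 : ℝ) ^ N * (N * Real.log 2) < 2 ^ N * 2 ^ (x + κ - ρ - 2 - N) := by gcongr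
    _ = 2 ^ x * 2 ^ κ / (4 * 2 ^ ρ) := by
        simp only [Real.rpow_sub two_pos, Real.rpow_add two_pos, Real.rpow_natCast, Real.rpow_ofNat]
        field_simp
        norm_num
    _ ≤ (4 * 2 ^ ρ * g) * 2 ^ κ / (4 * 2 ^ ρ) := by gcongr
    _ = g * 2 ^ κ := by field_simp

end Covering

section BinScheme

/-- Which parts of the encoded message are stored by each database, and which of them each database
returns under each of its two queries. -/
structure PartLayout (I : Type) where
  stored : Fin 2 → Finset I
  queried : Fin 2 → Fin 2 → Finset I
  queried_subset : ∀ n a, queried n a ⊆ stored n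

theorem target_sub {t : ℕ} (k : Fin 2) (x y : Msg t × Msg t) :
    target k (x - y) = target k x - target k y := by
  unfold target
  split_ifs <;> rfl

variable {I W W' M M' : Type} [DecidableEq I] {Λ : PartLayout I} {κ : ℕ} {s m : I → ℕ}

/-- The parts returned by the two databases together under the query pair `qq`. -/
def PartLayout.answered (Λ : PartLayout I) (qq : Fin 2 × Fin 2) : Finset I :=
  Λ.queried 0 qq.1 ∪ Λ.queried 1 qq.2

/-- The data behind a code in which both databases store a common `κ`-bit label, database `n`
stores the first `s i` bits of each part `i ∈ Λ.stored n`, and the label and the first `m i` bits of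
each queried part `i` are returned; the user wants `f k`. -/
structure BinScheme (Λ : PartLayout I) (f : Fin 2 → W → M) (κ : ℕ) (s m : I → ℕ) where
  label : W → Fin (2 ^ κ)
  bit : I → W → ℕ → ZMod 2
  recover_queried : ∀ n w w', label w = label w' → SameBits bit s (Λ.stored n) w w' →
    SameBits bit m (Λ.stored n) w w'
  recover_target : ∀ k qq w w', stdP k qq ≠ 0 → label w = label w' →
    SameBits bit m (Λ.answered qq) w w' → f k w = f k w'

/-- Precomposition of a bin scheme with a map `e` under which `f` determines the target `g`. -/
def BinScheme.comap {f : Fin 2 → W → M} {g : Fin 2 → W' → M'} (C : BinScheme Λ f κ s m)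
    (e : W' → W) (he : ∀ k w w', f k (e w) = f k (e w') → g k w = g k w') :
    BinScheme Λ g κ s m where
  label := C.label ∘ e
  bit i w := C.bit i (e w)
  recover_queried n _ _ hlabel hbits := C.recover_queried n _ _ hlabel hbits
  recover_target k qq w w' hP hlabel hbits :=
    he k w w' (C.recover_target k qq _ _ hP hlabel hbits)

variable {Γ : Type} {t n : ℕ}

/-- The block of messages encoded by a family of letter sequences. -/
def blockMsg (msg : (I → Γ) → Msg t × Msg t) (z : I → Fin n → Γ) (j : Fin n) : Msg t × Msg t :=
  msg fun i => z i j

/- All elements of `G` share their first `r i` bits, so those bits are neither stored nor sent. -/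
theorem nonempty_binScheme_of_cover [Fintype I] (msg : (I → Γ) → Msg t × Msg t)
    {r : I → ℕ} {h : I → (Fin n → Γ) → ℕ → ZMod 2} {G : Finset (I → Fin n → Γ)}
    (hshared : ∀ z ∈ G, ∀ u ∈ G, SameBits (coordBits h) r Finset.univ z u)
    (hstored : ∀ a, (∀ i ∈ Λ.stored a, s i = m i) ∨
      Resolves ∅ (Λ.stored a) (fun i => r i + s i) h G)
    (hanswered : ∀ qq, Resolves ∅ (Λ.answered qq) (fun i => r i + m i) h G)
    (htarget : ∀ k qq, stdP k qq ≠ 0 → ∀ z ∈ G, ∀ u ∈ G, Set.EqOn u z (Λ.answered qq) →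
      ∀ j, target k (blockMsg msg u j) = target k (blockMsg msg z j))
    {shift : Fin (2 ^ κ) → Fin n → Msg t × Msg t}
    (hcover : ∀ w, ∃ j, ∃ z ∈ G, blockMsg msg z = w - shift j) :
    Nonempty (BinScheme Λ (fun k (w : Fin n → Msg t × Msg t) j => target k (w j)) κ s m) := by
  choose label z hz hzw using hcover
  let bit (i : I) (w : Fin n → Msg t × Msg t) (k : ℕ) : ZMod 2 := coordBits h i (z w) (r i + k)
  have eqOn_of_sameBits {B : Finset I} {l : I → ℕ} {w w' : Fin n → Msg t × Msg t}
      (hres : Resolves ∅ B (fun i => r i + l i) h G) (hbits : SameBits bit l B w w') :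
      Set.EqOn (z w) (z w') B :=
    hres.eqOn (hz w') (hz w) (by simp) <|
      .append ((hshared _ (hz w) _ (hz w')).mono (Finset.subset_univ B) fun _ _ => le_rfl) hbits
  refine ⟨label, bit, fun a w w' _ hbits => ?_, fun k qq w w' hP hlabel hbits => ?_⟩
  · rcases hstored a with hsm | hres
    · exact hbits.mono subset_rfl fun i hi => (hsm i hi).ge
    · intro i hi k _
      exact congrArg (fun x => h i x (r i + k)) (eqOn_of_sameBits hres hbits hi)
  · funext j
    have heq := htarget k qq hP _ (hz w') _ (hz w) (eqOn_of_sameBits (hanswered qq) hbits) j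
    rw [hzw, hzw, Pi.sub_apply, Pi.sub_apply, target_sub, target_sub, hlabel] at heq
    exact sub_left_injective heq

end BinScheme

section SingleLetter

theorem exists_shift_cover {I Γ : Type} {t n κ : ℕ} {msg : (I → Γ) → Msg t × Msg t}
    {G : Finset (I → Fin n → Γ)}
    (hinj : Set.InjOn (blockMsg msg) (G : Set (I → Fin n → Γ)))
    (hcard : (2 : ℝ) ^ (n * (2 * t)) * Real.log (2 ^ (n * (2 * t))) < G.card * 2 ^ κ) :
    ∃ shift : Fin (2 ^ κ) → Fin n → Msg t × Msg t,
      ∀ w, ∃ j, ∃ z ∈ G, blockMsg msg z = w - shift j := by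
  classical
  have hW : Fintype.card (Fin n → Msg t × Msg t) = 2 ^ (n * (2 * t)) := by
    simp only [Fintype.card_pi_const, Fintype.card_prod, ZMod.card]
    ring
  obtain ⟨shift, hshift⟩ := exists_translates_cover (m := 2 ^ κ) (G.image (blockMsg msg)) (by
    rw [hW, Finset.card_image_of_injOn hinj]
    exact_mod_cast hcard)
  exact ⟨shift, fun w => (hshift w).imp fun _ hj => Finset.mem_image.mp hj⟩

variable {I Γ : Type} [Fintype I] [DecidableEq I] [Fintype Γ] [DecidableEq Γ] {Λ : PartLayout I}
  {v : I} {q : (I → Γ) → ℝ} {t : ℕ} {msg : (I → Γ) → Msg t × Msg t} {a m : I → ℝ}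

/-- The single-letter conditions, on the joint law `q` of the message letter (coordinate `v`,
decoded by `msg`) and the parts, under which the parts can be binned so that `a i` bits per letter
of part `i` are stored and `m i` are returned. The bins have `condCoordEnt q v i` further bits,
which are common to all codewords. -/
structure IsSingleLetterScheme (Λ : PartLayout I) (v : I) (q : (I → Γ) → ℝ)
    (msg : (I → Γ) → Msg t × Msg t) (a m : I → ℝ) : Prop where
  mem_stdSimplex : q ∈ stdSimplex ℝ (I → Γ)
  slepianWolf_stored : ∀ n, (∀ i ∈ Λ.stored n, a i = m i) ∨
    SlepianWolf q ∅ (Λ.stored n) (condCoordEnt q v + a)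
  slepianWolf_answered : ∀ qq, SlepianWolf q ∅ (Λ.answered qq) (condCoordEnt q v + m)
  msg_injective : ∀ y y', 0 < q y → 0 < q y' → msg y = msg y' → y v = y' v
  decodable : ∀ k qq, stdP k qq ≠ 0 → ∀ y y', 0 < q y → 0 < q y' →
    Set.EqOn y y' (Λ.answered qq) → target k (msg y) = target k (msg y')
  le_coordEnt : 2 * t + ∑ i, condCoordEnt q v i ≤ coordEnt q Finset.univ

theorem IsSingleLetterScheme.blockMsg_injOn (hS : IsSingleLetterScheme Λ v q msg a m) {n : ℕ}
    {r : I → ℕ} {h : I → (Fin n → Γ) → ℕ → ZMod 2} {G : Finset (I → Fin n → Γ)}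
    (hpos : ∀ z ∈ G, ∀ j, 0 < q fun i => z i j)
    (hshared : ∀ z ∈ G, ∀ u ∈ G, SameBits (coordBits h) r Finset.univ z u)
    (hres : Resolves {v} Finset.univ r h G) :
    Set.InjOn (blockMsg msg) (G : Set (I → Fin n → Γ)) := by
  intro u hu z hz huz
  have hv : Set.EqOn u z ({v} : Finset I) := by
    simp only [Finset.coe_singleton, Set.eqOn_singleton]
    funext j
    exact hS.msg_injective _ _ (hpos u hu j) (hpos z hz j) (congrFun huz j)
  funext i
  exact hres.eqOn hz hu hv (hshared u hu z hz) (Finset.mem_coe.mpr (Finset.mem_univ i))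

/- `η` is small enough for the `κ` label bits to absorb the slack of the `Fintype.card I` bins. -/
theorem IsSingleLetterScheme.eventually_card_bound (hS : IsSingleLetterScheme Λ v q msg a m)
    {δ η : ℝ} (hδ : 0 < δ) (hη : η * (2 * (3 * Fintype.card I + 1)) = δ) :
    ∀ᶠ n : ℕ in Filter.atTop, ∀ g : ℝ,
      (2 : ℝ) ^ (n * (coordEnt q Finset.univ - η)) ≤
        4 * 2 ^ (∑ i, ⌈n * (condCoordEnt q v i + 3 * η)⌉₊) * g →
      (2 : ℝ) ^ (n * (2 * t)) * Real.log (2 ^ (n * (2 * t))) < g * 2 ^ ⌈n * δ⌉₊ := by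
  filter_upwards [eventually_mul_lt_two_rpow (2 * t * Real.log 2) (Fintype.card I + 2)
    (half_pos hδ)] with n hn g hg
  refine mul_log_lt_mul_two_pow hg ?_
  have hη0 : 0 < η := pos_of_mul_pos_left (hη ▸ hδ) (by positivity)
  have hbins : ((∑ i, ⌈n * (condCoordEnt q v i + 3 * η)⌉₊ : ℕ) : ℝ) ≤
      n * (∑ i, condCoordEnt q v i + 3 * η * Fintype.card I) + Fintype.card I :=
    calc ((∑ i, ⌈n * (condCoordEnt q v i + 3 * η)⌉₊ : ℕ) : ℝ)
        ≤ ∑ i, (n * (condCoordEnt q v i + 3 * η) + 1) := by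
          push_cast
          gcongr with i
          have := condCoordEnt_nonneg hS.mem_stdSimplex v i
          exact (Nat.ceil_lt_add_one (by positivity)).le
      _ = n * (∑ i, condCoordEnt q v i + 3 * η * Fintype.card I) + Fintype.card I := by
          rw [Finset.sum_add_distrib, ← Finset.mul_sum, Finset.sum_add_distrib]
          simp only [Finset.sum_const, Finset.card_univ, nsmul_eq_mul]
          ring
  calc ((n * (2 * t) : ℕ) : ℝ) * Real.log 2 = 2 * t * Real.log 2 * n := by push_cast; ring
    _ < 2 ^ (n * (δ / 2) - (Fintype.card I + 2)) := hn
    _ ≤ _ := by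
        refine Real.rpow_le_rpow_of_exponent_le one_le_two ?_
        have hent := mul_le_mul_of_nonneg_left hS.le_coordEnt (Nat.cast_nonneg (α := ℝ) n)
        have hlabel := Nat.le_ceil (n * δ)
        push_cast at hbins ⊢
        linear_combination hent + hlabel + hbins + (n / 2 : ℝ) * hη

theorem IsSingleLetterScheme.eventually_nonempty_binScheme
    (hS : IsSingleLetterScheme Λ v q msg a m) {δ : ℝ} (hδ : 0 < δ) :
    ∀ᶠ n : ℕ in Filter.atTop, Nonempty (BinScheme Λ
      (fun k (w : Fin n → Msg t × Msg t) j => target k (w j)) ⌈n * δ⌉₊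
      (fun i => ⌈n * a i⌉₊) (fun i => ⌈n * m i⌉₊)) := by
  obtain ⟨η, hη⟩ : ∃ η, η * (2 * (3 * Fintype.card I + 1)) = δ :=
    ⟨_, div_mul_cancel₀ δ (by positivity)⟩
  have hη0 : 0 < η := pos_of_mul_pos_left (hη ▸ hδ) (by positivity)
  let rate : Fin 3 → I → ℝ := ![0, m, a]
  filter_upwards [hS.eventually_card_bound hδ hη,
    eventually_exists_binning hS.mem_stdSimplex (fun τ => condCoordEnt q v + rate τ) hη0]
    with n hcard hbinning
  let r (i : I) : ℕ := ⌈n * (condCoordEnt q v i + 3 * η)⌉₊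
  obtain ⟨h, G, hpos, hG, hshared, hres⟩ :=
    hbinning (fun τ i => r i + ⌈n * rate τ i⌉₊) (fun τ i => by
      have hr := Nat.le_ceil (n * (condCoordEnt q v i + 3 * η))
      have hrate := Nat.le_ceil (n * rate τ i)
      rw [Pi.add_apply]
      push_cast
      linarith) r
  have hinj := hS.blockMsg_injOn hpos hshared (by
    simpa [rate] using hres 0 {v} Finset.univ (Finset.subset_univ _)
      (by simpa [rate] using slepianWolf_condCoordEnt hS.mem_stdSimplex v))
  obtain ⟨shift, hshift⟩ := exists_shift_cover hinj (hcard _ hG)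
  refine nonempty_binScheme_of_cover msg hshared (fun b => ?_)
    (fun qq => hres 1 ∅ _ (Finset.empty_subset _) (hS.slepianWolf_answered qq))
    (fun k qq hP z hz u hu huz j => hS.decodable k qq hP _ _ (hpos u hu j) (hpos z hz j)
      fun i hi => congrFun (huz hi) j) hshift
  exact (hS.slepianWolf_stored b).imp (fun ham i hi => by rw [ham i hi])
    (hres 2 ∅ _ (Finset.empty_subset _))

end SingleLetter

section Codes

theorem exists_bits_encoding {I W : Type} {κ : ℕ} (label : W → Fin (2 ^ κ))
    (b : I → W → ℕ → ZMod 2) (S : Finset I) (l : I → ℕ) :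
    ∃ f : W → Fin (κ + ∑ i ∈ S, l i) → ZMod 2, ∀ w w',
      f w = f w' ↔ label w = label w' ∧ SameBits b l S w w' := by
  classical
  have hcard : Fintype.card (Fin (2 ^ κ) × ((i : S) → Fin (l i) → ZMod 2)) =
      Fintype.card (Fin (κ + ∑ i ∈ S, l i) → ZMod 2) := by
    rw [Fintype.card_prod, card_pi_bits, Fintype.card_fin, ← pow_add, Fintype.card_pi_const,
      ZMod.card]
  let enc := Fintype.equivOfCardEq hcard
  refine ⟨fun w => enc (label w, fun i k => b i w k), fun w w' => ?_⟩
  rw [enc.injective.eq_iff, Prod.mk.injEq]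
  refine and_congr_right fun _ => ⟨fun h i hi k hk => ?_, fun h => ?_⟩
  · exact congrFun (congrFun h ⟨i, hi⟩) ⟨k, hk⟩
  · funext i k
    exact h i i.2 k k.2

theorem stdP_nonneg (k : Fin 2) (qq : Fin 2 × Fin 2) : 0 ≤ stdP k qq := by
  unfold stdP
  split_ifs <;> norm_num

theorem sum_stdP_marginal (k n a : Fin 2) :
    (∑ qq : Fin 2 × Fin 2, if (if n = 0 then qq.1 else qq.2) = a then stdP k qq else 0) =
      1 / 2 := by
  rw [Fintype.sum_prod_type]
  fin_cases k <;> fin_cases n <;> fin_cases a <;> simp [stdP, Fin.sum_univ_two]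

theorem sum_stdP (k : Fin 2) : ∑ qq, stdP k qq = 1 := by
  rw [Fintype.sum_prod_type]
  fin_cases k <;> norm_num [stdP, Fin.sum_univ_two]

variable {N : ℕ} {σ : Fin 2 → ℕ} {len : Fin 2 → Fin 2 → ℕ}
  {st : (n : Fin 2) → Msg N × Msg N → Fin (σ n) → ZMod 2}
  {an : (n a : Fin 2) → Msg N × Msg N → Fin (len n a) → ZMod 2}

/-- The code with query distribution `stdP` whose databases hold `st n w` and reply with `an n a w`.
Databases and user recover what they need from some message pair consistent with what they see. -/
noncomputable def stdCode (st : (n : Fin 2) → Msg N × Msg N → Fin (σ n) → ZMod 2)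
    (an : (n a : Fin 2) → Msg N × Msg N → Fin (len n a) → ZMod 2) : CodeBase N (Fin 2) where
  P := stdP
  P_nonneg := stdP_nonneg
  P_sum := sum_stdP
  stor := σ
  phi := st
  blen := len
  ans n a s := an n a (Function.invFun (st n) s)
  dec k a₁ a₂ x y := target k (Function.invFun (fun w => (an 0 a₁ w, an 1 a₂ w)) (x, y))
  privacy n a s := by rw [sum_stdP_marginal, sum_stdP_marginal]

theorem isZeroError_stdCode (han : ∀ n a w w', st n w = st n w' → an n a w = an n a w')
    (htarget : ∀ k qq w w', stdP k qq ≠ 0 → an 0 qq.1 w = an 0 qq.1 w' →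
      an 1 qq.2 w = an 1 qq.2 w' → target k w = target k w') :
    IsZeroError (stdCode st an) := by
  have hans (n a : Fin 2) (w : Msg N × Msg N) :
      (stdCode st an).ans n a ((stdCode st an).phi n w) = an n a w :=
    han n a _ _ (Function.invFun_eq ⟨w, rfl⟩)
  intro k w qq hP
  rw [retrieved, hans, hans]
  have hinv := Function.invFun_eq (f := fun w => (an 0 qq.1 w, an 1 qq.2 w)) ⟨w, rfl⟩
  exact htarget k qq _ _ hP (congrArg Prod.fst hinv) (congrArg Prod.snd hinv)

theorem betaRate_stdCode (n : Fin 2) :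
    betaRate (stdCode st an) n = (∑ a, (len n a : ℝ)) / 2 := by
  rw [betaRate, Fintype.sum_prod_type]
  fin_cases n <;> simp [stdCode, stdP, Fin.sum_univ_two] <;> ring

theorem BinScheme.exists_code {I : Type} [DecidableEq I] {Λ : PartLayout I} {κ : ℕ} {s m : I → ℕ}
    (C : BinScheme Λ (target (L := N)) κ s m) :
    ∃ D : Code N, IsZeroError D.base ∧
      D.base.stor 0 + D.base.stor 1 = ∑ n, (κ + ∑ i ∈ Λ.stored n, s i) ∧
      betaRate D.base 0 + betaRate D.base 1 =
        ((∑ p : Fin 2 × Fin 2, (κ + ∑ i ∈ Λ.queried p.1 p.2, m i) : ℕ) : ℝ) / 2 := by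
  choose st hst using fun n => exists_bits_encoding C.label C.bit (Λ.stored n) s
  choose an han using fun n a => exists_bits_encoding C.label C.bit (Λ.queried n a) m
  refine ⟨⟨Fin 2, stdCode st an⟩, isZeroError_stdCode ?_ ?_, (Fin.sum_univ_two _).symm, ?_⟩
  · intro n a w w' h
    obtain ⟨hlabel, hbits⟩ := (hst n w w').mp h
    exact (han n a w w').mpr ⟨hlabel, (C.recover_queried n w w' hlabel hbits).mono
      (Λ.queried_subset n a) fun _ _ => le_rfl⟩
  · intro k qq w w' hP h₀ h₁
    obtain ⟨hlabel, hbits₀⟩ := (han _ _ w w').mp h₀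
    obtain ⟨-, hbits₁⟩ := (han _ _ w w').mp h₁
    exact C.recover_target k qq w w' hP hlabel fun i hi =>
      (Finset.mem_union.mp hi).elim (hbits₀ i) (hbits₁ i)
  · simp only [betaRate_stdCode, Fintype.sum_prod_type, Fin.sum_univ_two]
    push_cast
    ring

end Codes

section Achievability

/-- Splits a message into `n` blocks of length `t`, padding with zeros; nothing is lost if
`N ≤ n * t`. -/
def cutMsg {N : ℕ} (n t : ℕ) (w : Msg N) (j : Fin n) : Msg t := fun i =>
  if h : j * t + i < N then w ⟨j * t + i, h⟩ else 0

theorem cutMsg_injective {N n t : ℕ} (ht : 1 ≤ t) (hN : N ≤ n * t) :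
    Function.Injective (cutMsg n t : Msg N → Fin n → Msg t) := by
  intro w w' h
  funext x
  have hx : x / t < n := (Nat.div_lt_iff_lt_mul ht).mpr (by omega)
  have hw := congrFun (congrFun h ⟨x / t, hx⟩) ⟨x % t, Nat.mod_lt _ ht⟩
  simpa only [cutMsg, Nat.div_add_mod', x.2, dite_true] using hw

theorem target_cutMsg {N n t : ℕ} (k : Fin 2) (w : Msg N × Msg N) (j : Fin n) :
    target k (cutMsg n t w.1 j, cutMsg n t w.2 j) = cutMsg n t (target k w) j := by
  unfold target
  split_ifs <;> rfl

theorem eventually_blocks_mul_le {t : ℕ} (ht : 1 ≤ t) (x C : ℝ) {ε : ℝ} (hε : 0 < ε) :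
    ∀ᶠ N : ℕ in Filter.atTop,
      ((N / t + 1 : ℕ) : ℝ) * (t * x + ε / 2) + C ≤ N * (x + ε) := by
  have hlim := tendsto_natCast_atTop_atTop.atTop_mul_const (half_pos hε)
  filter_upwards [hlim.eventually_ge_atTop (t * |x| + ε / 2 + C)] with N hN
  have hsplit := Nat.div_add_mod N t
  have hmod := Nat.mod_lt N ht
  have hlower : (N : ℝ) ≤ (N / t + 1 : ℕ) * t := by
    exact_mod_cast (show N ≤ (N / t + 1) * t by linarith)
  have hupper : ((N / t + 1 : ℕ) : ℝ) * t ≤ N + t := by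
    exact_mod_cast (show (N / t + 1) * t ≤ N + t by linarith [Nat.zero_le (N % t)])
  have hblocks : ((N / t + 1 : ℕ) : ℝ) ≤ N + 1 := by
    exact_mod_cast Nat.succ_le_succ (Nat.div_le_self N t)
  have hround : (((N / t + 1 : ℕ) : ℝ) * t - N) * x ≤ t * |x| := by
    have := mul_le_mul_of_nonneg_left (le_abs_self x) (sub_nonneg.mpr hlower)
    have := mul_le_mul_of_nonneg_right (sub_le_iff_le_add'.mpr hupper) (abs_nonneg x)
    linarith
  have hslack := mul_le_mul_of_nonneg_right hblocks (half_pos hε).le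
  linarith

theorem eventually_sum_bits_le {I J : Type} [Fintype J] (S : J → Finset I) {x : I → ℝ}
    (hx : 0 ≤ x) {t : ℕ} (ht : 1 ≤ t) {y : ℝ}
    (hxy : ∑ j, ∑ i ∈ S j, x i ≤ Fintype.card J * (t * y)) {ε : ℝ} (hε : 0 < ε) :
    ∀ᶠ N : ℕ in Filter.atTop,
      ((∑ j, (⌈(N / t + 1 : ℕ) * (ε / 2)⌉₊ + ∑ i ∈ S j, ⌈(N / t + 1 : ℕ) * x i⌉₊) : ℕ) : ℝ) ≤
        Fintype.card J * (N * (y + ε)) := by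
  let c : ℕ := ∑ j, (S j).card
  filter_upwards [eventually_blocks_mul_le ht y (1 + c) hε] with N hN
  generalize N / t + 1 = n at hN ⊢
  have hceil {a : ℝ} (ha : 0 ≤ a) : (⌈n * a⌉₊ : ℝ) ≤ n * a + 1 :=
    (Nat.ceil_lt_add_one (by positivity)).le
  have hpart (j : J) : (∑ i ∈ S j, ⌈n * x i⌉₊ : ℝ) ≤ n * ∑ i ∈ S j, x i + c :=
    calc (∑ i ∈ S j, ⌈n * x i⌉₊ : ℝ) ≤ ∑ i ∈ S j, (n * x i + 1) :=
          Finset.sum_le_sum fun i _ => hceil (hx i)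
      _ = n * ∑ i ∈ S j, x i + (S j).card := by
          rw [Finset.sum_add_distrib, ← Finset.mul_sum, Finset.sum_const, nsmul_one]
      _ ≤ n * ∑ i ∈ S j, x i + c := by
          gcongr
          exact Finset.single_le_sum (f := fun j => (S j).card) (fun _ _ => Nat.zero_le _)
            (Finset.mem_univ j)
  push_cast
  calc ∑ j, ((⌈n * (ε / 2)⌉₊ : ℝ) + ∑ i ∈ S j, (⌈n * x i⌉₊ : ℝ))
      ≤ ∑ j, ((n * (ε / 2) + 1) + (n * ∑ i ∈ S j, x i + c)) :=
        Finset.sum_le_sum fun j _ => add_le_add (hceil (half_pos hε).le) (hpart j)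
    _ = n * ∑ j, ∑ i ∈ S j, x i + Fintype.card J * (n * (ε / 2) + (1 + c)) := by
        simp only [Finset.sum_add_distrib, ← Finset.mul_sum, Finset.sum_const, Finset.card_univ,
          nsmul_eq_mul]
        ring
    _ ≤ n * (Fintype.card J * (t * y)) +
          Fintype.card J * (n * (ε / 2) + (1 + c)) := by gcongr
    _ = Fintype.card J * (n * (t * y + ε / 2) + (1 + c)) := by ring
    _ ≤ Fintype.card J * (N * (y + ε)) := by gcongr

theorem IsSingleLetterScheme.achievable {I Γ : Type} [Fintype I] [DecidableEq I] [Fintype Γ]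
    [DecidableEq Γ] {Λ : PartLayout I} {v : I} {q : (I → Γ) → ℝ} {t : ℕ}
    {msg : (I → Γ) → Msg t × Msg t} {a m : I → ℝ} (hS : IsSingleLetterScheme Λ v q msg a m)
    (ht : 1 ≤ t) (ha : 0 ≤ a) (hm : 0 ≤ m) {ab : ℝ × ℝ}
    (hstored : ∑ n, ∑ i ∈ Λ.stored n, a i ≤ 2 * t * ab.1)
    (hqueried : ∑ n, ∑ c, ∑ i ∈ Λ.queried n c, m i ≤ 4 * t * ab.2) : Achievable ab := by
  intro ε hε
  have hblocks : Filter.Tendsto (fun N => N / t + 1) Filter.atTop Filter.atTop :=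
    (Filter.tendsto_add_atTop_nat 1).comp
      (Nat.tendsto_div_const_atTop (Nat.one_le_iff_ne_zero.mp ht))
  refine Filter.eventually_atTop.mp ?_
  filter_upwards [hblocks.eventually (hS.eventually_nonempty_binScheme (half_pos hε)),
    eventually_sum_bits_le Λ.stored ha ht (y := ab.1)
      (by rwa [Fintype.card_fin, Nat.cast_ofNat, ← mul_assoc]) hε,
    eventually_sum_bits_le (fun p : Fin 2 × Fin 2 => Λ.queried p.1 p.2) hm ht (y := ab.2)
      (by
        rw [Fintype.sum_prod_type, Fintype.card_prod, Fintype.card_fin]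
        push_cast
        linarith) hε] with N hN hstor hretr
  obtain ⟨scheme⟩ := hN
  have hcover : N ≤ (N / t + 1) * t := by
    rw [mul_comm]
    exact (Nat.lt_mul_div_succ N ht).le
  obtain ⟨D, hzero, hD, hβ⟩ := (scheme.comap (g := target (L := N))
    (fun w j => (cutMsg _ t w.1 j, cutMsg _ t w.2 j)) fun k w w' h => by
      simp only [target_cutMsg] at h
      exact cutMsg_injective ht hcover h).exists_code
  refine ⟨D, hzero, ?_, ?_⟩
  · rw [hD]
    rw [Fintype.card_fin, Nat.cast_ofNat] at hstor
    linarith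
  · rw [hβ]
    rw [Fintype.card_prod, Fintype.card_fin] at hretr
    push_cast at hretr ⊢
    linarith

end Achievability

section InnerBound

theorem ent_family_sub_of_factorizes {Ω α γ ι : Type} [Fintype Ω] [Fintype α] [DecidableEq α]
    [Fintype γ] [DecidableEq γ] [Fintype ι] [DecidableEq ι] {p : Ω → ℝ} (hp : ∀ ω, 0 ≤ p ω)
    (V : Ω → α) (X : ι → Ω → γ)
    (h : ∀ ω, prOf p (fun ω => (V ω, fun i => X i ω)) (V ω, fun i => X i ω) *
        prOf p V (V ω) ^ Fintype.card ι =
      prOf p V (V ω) * ∏ i, prOf p (fun ω => (V ω, X i ω)) (V ω, X i ω)) :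
    ent p (fun ω => (V ω, fun i => X i ω)) - ent p V =
      ∑ i, (ent p (fun ω => (V ω, X i ω)) - ent p V) := by
  simp only [ent_eq_sum, ← Finset.sum_sub_distrib]
  rw [Finset.sum_comm]
  refine Finset.sum_congr rfl fun ω _ => ?_
  rcases (hp ω).eq_or_lt with h0 | h0
  · simp [← h0]
  have hpos : ∀ {δ : Type} [DecidableEq δ] (W : Ω → δ), prOf p W (W ω) ≠ 0 :=
    fun W => (h0.trans_le (le_prOf_self hp W ω)).ne'
  have hX : ∀ i ∈ Finset.univ, prOf p (fun ω => (V ω, X i ω)) (V ω, X i ω) ≠ 0 :=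
    fun i _ => hpos fun ω => (V ω, X i ω)
  have hlog := congrArg (Real.logb 2) (h ω)
  rw [Real.logb_mul (hpos fun ω => (V ω, fun i => X i ω)) (pow_ne_zero _ (hpos V)),
    Real.logb_mul (hpos V) (Finset.prod_ne_zero_iff.mpr hX), Real.logb_pow,
    Real.logb_prod _ _ hX] at hlog
  rw [Finset.sum_sub_distrib, ← Finset.mul_sum, Finset.sum_neg_distrib, Finset.sum_const,
    Finset.card_univ, nsmul_eq_mul]
  linear_combination -p ω * hlog

theorem exists_of_prOf_pos {Ω α : Type} [Fintype Ω] [DecidableEq α] {p : Ω → ℝ} {X : Ω → α} {x : α}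
    (h : 0 < prOf p X x) : ∃ ω, p ω ≠ 0 ∧ X ω = x := by
  obtain ⟨ω, -, hω⟩ := Finset.exists_ne_zero_of_sum_ne_zero h.ne'
  exact ⟨ω, fun h0 => hω (by simp [h0]), of_not_not fun hx => hω (if_neg hx)⟩

/-- Extends rates of the five parts by rate `0` for the message letter, which is never sent. -/
def partRate (x : Fin 5 → ℝ) (i : Option (Fin 5)) : ℝ := i.elim 0 x

theorem partRate_nonneg {x : Fin 5 → ℝ} (hx : ∀ i, 0 ≤ x i) : 0 ≤ partRate x
  | none => le_rfl
  | some i => hx i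

/-- The layout of the inner bound: database `0` stores `X0, X1, X2` and returns `X0` together with
one of `X1` and `X2`; database `1` stores `Y1, Y2` and returns one of them. The parts are indexed
from `0` to `4` in this order, and `none` is the message letter. -/
def innerLayout : PartLayout (Option (Fin 5)) where
  stored := ![{some 0, some 1, some 2}, {some 3, some 4}]
  queried := ![![{some 0, some 1}, {some 0, some 2}], ![{some 3}, {some 4}]]
  queried_subset := by decide

theorem sum_partRate_stored (x : Fin 5 → ℝ) :
    ∑ n, ∑ i ∈ innerLayout.stored n, partRate x i = x 0 + x 1 + x 2 + x 3 + x 4 := by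
  simp [innerLayout, partRate, add_assoc]

theorem sum_partRate_queried (x : Fin 5 → ℝ) :
    ∑ n, ∑ c, ∑ i ∈ innerLayout.queried n c, partRate x i =
      2 * x 0 + x 1 + x 2 + x 3 + x 4 := by
  simp [innerLayout, partRate, two_mul, add_assoc, add_left_comm]

namespace RVSetup

variable {t : ℕ} (S : RVSetup t)

theorem p_mem_stdSimplex : S.p ∈ stdSimplex ℝ S.Ω := ⟨S.p_nonneg, S.p_sum⟩

/-- The message letter and the five parts as one family of random variables. -/
def letter (ω : S.Ω) : Option (Fin 5) → (Msg t × Msg t) ⊕ S.γ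
  | none => Sum.inl (S.V ω)
  | some i => Sum.inr (S.X i ω)

@[simp]
theorem letter_none (ω : S.Ω) : S.letter ω none = Sum.inl (S.V ω) := rfl

@[simp]
theorem letter_some (ω : S.Ω) (i : Fin 5) : S.letter ω (some i) = Sum.inr (S.X i ω) := rfl

/-- The joint law of the message letter and the five parts. -/
noncomputable def law : (Option (Fin 5) → (Msg t × Msg t) ⊕ S.γ) → ℝ := prOf S.p S.letter

/-- The message pair carried by the letter `none`, with the junk value `0` off the support. -/
def msg (y : Option (Fin 5) → (Msg t × Msg t) ⊕ S.γ) : Msg t × Msg t :=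
  Sum.elim id (fun _ => 0) (y none)

theorem law_mem_stdSimplex : S.law ∈ stdSimplex ℝ (Option (Fin 5) → (Msg t × Msg t) ⊕ S.γ) :=
  prOf_mem_stdSimplex S.p_mem_stdSimplex S.letter

theorem coordEnt_law {δ : Type} [Fintype δ] [DecidableEq δ] {B : Finset (Option (Fin 5))}
    {Y : S.Ω → δ} (h : ∀ ω ω', (∀ i ∈ B, S.letter ω i = S.letter ω' i) ↔ Y ω = Y ω') :
    coordEnt S.law B = ent S.p Y := by
  rw [coordEnt, law, ent_prOf]
  exact ent_congr S.p fun ω ω' => restrict_eq_restrict_iff.trans (h ω ω')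

theorem coordEnt_law_none : coordEnt S.law {none} = ent S.p S.V := S.coordEnt_law (by simp)

theorem coordEnt_law_some (i : Fin 5) : coordEnt S.law {some i} = ent S.p (S.X i) :=
  S.coordEnt_law (by simp)

theorem condCoordEnt_law_some (i : Fin 5) :
    condCoordEnt S.law none (some i) = ent S.p (fun ω => (S.V ω, S.X i ω)) - ent S.p S.V := by
  rw [condCoordEnt, coordEnt_law_none,
    S.coordEnt_law (Y := fun ω => (S.V ω, S.X i ω)) (by simp)]

theorem condCoordEnt_law_add_mi (i : Fin 5) :
    condCoordEnt S.law none (some i) + mi S.p S.V (S.X i) = ent S.p (S.X i) := by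
  rw [condCoordEnt_law_some, mi]
  ring

theorem ent_V : ent S.p S.V = 2 * t := by
  rw [ent_of_forall_prOf_eq S.p_mem_stdSimplex S.V_unif, Real.logb_inv, Real.logb_pow,
    Real.logb_self_eq_one one_lt_two]
  push_cast
  ring

theorem coordEnt_insert_sub_le_add_cmi (l : Fin 5) {P : Finset (Option (Fin 5))} {δ : Type}
    [Fintype δ] [DecidableEq δ] {Y : S.Ω → δ}
    (h : ∀ ω ω', (∀ i ∈ P, S.letter ω i = S.letter ω' i) ↔ Y ω = Y ω') :
    coordEnt S.law (insert (some l) P) - coordEnt S.law P ≤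
      condCoordEnt S.law none (some l) + cmi S.p S.V (S.X l) Y := by
  have hX : coordEnt S.law (insert (some l) P) = ent S.p (fun ω => (S.X l ω, Y ω)) :=
    S.coordEnt_law fun ω ω' => by rw [Finset.forall_mem_insert, h]; simp
  have hV : coordEnt S.law (insert none P) = ent S.p (fun ω => (S.V ω, Y ω)) :=
    S.coordEnt_law fun ω ω' => by rw [Finset.forall_mem_insert, h]; simp
  have hVX : coordEnt S.law (insert (some l) (insert none P)) =
      ent S.p (fun ω => (S.V ω, S.X l ω, Y ω)) :=
    S.coordEnt_law fun ω ω' => by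
      rw [Finset.forall_mem_insert, Finset.forall_mem_insert, h]
      simp [and_left_comm]
  have hsub := coordEnt_insert_sub_le S.law_mem_stdSimplex (B := {none}) (C := insert none P)
    (by simp) (some l)
  rw [Finset.pair_comm, ← condCoordEnt] at hsub
  rw [cmi, ← hX, ← hV, ← hVX, ← S.coordEnt_law h]
  linarith

/-- The retrieval rates `β1^(0), β1^(1), β1^(2), β2^(1), β2^(2)`. -/
noncomputable def queryRate : Fin 5 → ℝ :=
  ![mi S.p S.V (S.X 0), cmi S.p S.V (S.X 1) (S.X 0), cmi S.p S.V (S.X 2) (S.X 0),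
    max (cmi S.p S.V (S.X 3) (fun ω => (S.X 0 ω, S.X 1 ω)))
      (cmi S.p S.V (S.X 3) (fun ω => (S.X 0 ω, S.X 2 ω))),
    max (cmi S.p S.V (S.X 4) (fun ω => (S.X 0 ω, S.X 1 ω)))
      (cmi S.p S.V (S.X 4) (fun ω => (S.X 0 ω, S.X 2 ω)))]

theorem queryRate_nonneg (i : Fin 5) : 0 ≤ S.queryRate i := by
  have hp := S.p_mem_stdSimplex
  fin_cases i
  · exact mi_nonneg hp S.V (S.X 0)
  · exact cmi_nonneg hp S.V (S.X 1) (S.X 0)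
  · exact cmi_nonneg hp S.V (S.X 2) (S.X 0)
  · exact le_max_of_le_left (cmi_nonneg hp S.V (S.X 3) _)
  · exact le_max_of_le_left (cmi_nonneg hp S.V (S.X 4) _)

theorem slepianWolf_triple {e : Option (Fin 5) → ℝ} {j k : Fin 5} (hj : j ≠ 0) (hk : k ≠ 0)
    (hkj : k ≠ j)
    (h0 : mi S.p S.V (S.X 0) ≤ e (some 0))
    (h1 : cmi S.p S.V (S.X j) (S.X 0) ≤ e (some j))
    (h2 : cmi S.p S.V (S.X k) (fun ω => (S.X 0 ω, S.X j ω)) ≤ e (some k)) :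
    SlepianWolf S.law ∅ {some 0, some j, some k} (condCoordEnt S.law none + e) := by
  have hq := S.law_mem_stdSimplex
  have hsw0 : SlepianWolf S.law ∅ {some 0} (condCoordEnt S.law none + e) :=
    (SlepianWolf.refl S.law ∅ _).insert_coord hq (Finset.notMem_empty _) (by
      rw [coordEnt_empty hq, sub_zero, insert_empty_eq, coordEnt_law_some, Pi.add_apply,
        ← S.condCoordEnt_law_add_mi 0]
      gcongr)
  have hswj : SlepianWolf S.law ∅ {some j, some 0} (condCoordEnt S.law none + e) :=
    hsw0.insert_coord hq (by simpa using hj)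
      ((S.coordEnt_insert_sub_le_add_cmi j (by simp)).trans (add_le_add_right h1 _))
  have hswk : SlepianWolf S.law ∅ {some k, some j, some 0} (condCoordEnt S.law none + e) :=
    hswj.insert_coord hq (by simp [hk, hkj])
      ((S.coordEnt_insert_sub_le_add_cmi k (by simp [and_comm])).trans (add_le_add_right h2 _))
  convert hswk using 1
  grind

theorem slepianWolf_answered (qq : Fin 2 × Fin 2) :
    SlepianWolf S.law ∅ (innerLayout.answered qq)
      (condCoordEnt S.law none + partRate S.queryRate) := by
  obtain ⟨c, d⟩ := qq
  fin_cases c <;> fin_cases d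
  · exact S.slepianWolf_triple (j := 1) (k := 3) (by decide) (by decide) (by decide) le_rfl le_rfl
      (le_max_left _ _)
  · exact S.slepianWolf_triple (j := 1) (k := 4) (by decide) (by decide) (by decide) le_rfl le_rfl
      (le_max_left _ _)
  · exact S.slepianWolf_triple (j := 2) (k := 3) (by decide) (by decide) (by decide) le_rfl le_rfl
      (le_max_right _ _)
  · exact S.slepianWolf_triple (j := 2) (k := 4) (by decide) (by decide) (by decide) le_rfl le_rfl
      (le_max_right _ _)

theorem slepianWolf_of_rstarMD {M : ℕ} (e : Fin M ↪ Fin 5) {x : Fin 5 → ℝ}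
    (h : RstarMD S.p S.V (fun i => S.X (e i)) {Finset.univ} (fun i => x (e i))
      (fun i => mi S.p S.V (S.X (e i)))) :
    SlepianWolf S.law ∅ (Finset.univ.map (e.trans Function.Embedding.some))
      (condCoordEnt S.law none + partRate x) := by
  intro J hJ
  rw [Finset.sdiff_empty] at hJ
  obtain ⟨J, -, rfl⟩ := Finset.subset_map_iff.mp hJ
  have hjEnt : ∀ A : Finset (Fin M), jEnt S.p (fun i => S.X (e i)) A =
      coordEnt S.law (A.map (e.trans Function.Embedding.some)) := fun A =>
    (S.coordEnt_law fun ω ω' => by simp [funext_iff]).symm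
  have hMD := h.2.2 _ (Finset.mem_singleton_self _) J (Finset.subset_univ J)
  rw [cjEnt, hjEnt, hjEnt, Finset.union_sdiff_of_subset (Finset.subset_univ J), Finset.map_sdiff,
    ← Finset.sum_congr rfl fun i _ => S.condCoordEnt_law_add_mi (e i), Finset.sum_add_distrib,
    Finset.sum_sub_distrib] at hMD
  simp only [Finset.sum_map, Pi.add_apply, Finset.sum_add_distrib, partRate,
    Function.Embedding.trans_apply, Function.Embedding.some_apply, Option.elim_some]
  linarith

theorem nonneg_and_slepianWolf_of_rstarMD_or_eq {M : ℕ} (e : Fin M ↪ Fin 5) {x : Fin 5 → ℝ}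
    (h : RstarMD S.p S.V (fun i => S.X (e i)) {Finset.univ} (fun i => x (e i))
      (fun i => mi S.p S.V (S.X (e i))) ∨ ∀ i, x (e i) = S.queryRate (e i)) :
    (∀ i, 0 ≤ x (e i)) ∧
      ((∀ i ∈ Finset.univ.map (e.trans Function.Embedding.some),
          partRate x i = partRate S.queryRate i) ∨
        SlepianWolf S.law ∅ (Finset.univ.map (e.trans Function.Embedding.some))
          (condCoordEnt S.law none + partRate x)) := by
  rcases h with h | h
  · exact ⟨fun i => (h.1 i).1, Or.inr (S.slepianWolf_of_rstarMD e h)⟩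
  · refine ⟨fun i => (S.queryRate_nonneg (e i)).trans_eq (h i).symm, Or.inl fun i hi => ?_⟩
    obtain ⟨i, -, rfl⟩ := Finset.mem_map.mp hi
    exact h i

theorem nonneg_and_slepianWolf_stored {c0 c1 : Prop} {x : Fin 5 → ℝ} (hx : x 0 = S.queryRate 0)
    (hmd0 : c0 → RstarMD S.p S.V ![S.X 0, S.X 1, S.X 2] {Finset.univ} ![x 0, x 1, x 2]
      ![mi S.p S.V (S.X 0), mi S.p S.V (S.X 1), mi S.p S.V (S.X 2)])
    (heq0 : ¬c0 → x 1 = S.queryRate 1 ∧ x 2 = S.queryRate 2)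
    (hmd1 : c1 → RstarMD S.p S.V ![S.X 3, S.X 4] {Finset.univ} ![x 3, x 4]
      ![mi S.p S.V (S.X 3), mi S.p S.V (S.X 4)])
    (heq1 : ¬c1 → x 3 = S.queryRate 3 ∧ x 4 = S.queryRate 4) :
    (∀ i, 0 ≤ x i) ∧ ∀ n, (∀ i ∈ innerLayout.stored n, partRate x i = partRate S.queryRate i) ∨
      SlepianWolf S.law ∅ (innerLayout.stored n) (condCoordEnt S.law none + partRate x) := by
  have h0 := S.nonneg_and_slepianWolf_of_rstarMD_or_eq ⟨![0, 1, 2], by decide⟩ (x := x) <|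
    (em c0).imp (fun hc => by convert hmd0 hc using 1 <;> (funext i; fin_cases i <;> rfl))
      fun hc => Fin.forall_fin_succ.mpr ⟨hx, Fin.forall_fin_two.mpr (heq0 hc)⟩
  have h1 := S.nonneg_and_slepianWolf_of_rstarMD_or_eq ⟨![3, 4], by decide⟩ (x := x) <|
    (em c1).imp (fun hc => by convert hmd1 hc using 1 <;> (funext i; fin_cases i <;> rfl))
      fun hc => Fin.forall_fin_two.mpr (heq1 hc)
  refine ⟨fun i => ?_, Fin.forall_fin_two.mpr ⟨h0.2, h1.2⟩⟩
  fin_cases i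
  exacts [h0.1 0, h0.1 1, h0.1 2, h1.1 0, h1.1 1]

theorem coordEnt_law_univ_of_factorizes
    (h : ∀ (v : Msg t × Msg t) (x0 x1 x2 y1 y2 : S.γ),
      prOf S.p (fun ω => (S.V ω, S.X 0 ω, S.X 1 ω, S.X 2 ω, S.X 3 ω, S.X 4 ω))
          (v, x0, x1, x2, y1, y2) * (prOf S.p S.V v) ^ 4 =
        prOf S.p (fun ω => (S.V ω, S.X 0 ω)) (v, x0) *
        prOf S.p (fun ω => (S.V ω, S.X 1 ω)) (v, x1) *
        prOf S.p (fun ω => (S.V ω, S.X 2 ω)) (v, x2) *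
        prOf S.p (fun ω => (S.V ω, S.X 3 ω)) (v, y1) *
        prOf S.p (fun ω => (S.V ω, S.X 4 ω)) (v, y2)) :
    coordEnt S.law Finset.univ = 2 * t + ∑ i, condCoordEnt S.law none i := by
  have hfamily := ent_family_sub_of_factorizes S.p_nonneg S.V S.X fun ω => by
    have htuple : prOf S.p (fun ω => (S.V ω, fun i => S.X i ω)) (S.V ω, fun i => S.X i ω) =
        prOf S.p (fun ω => (S.V ω, S.X 0 ω, S.X 1 ω, S.X 2 ω, S.X 3 ω, S.X 4 ω))
          (S.V ω, S.X 0 ω, S.X 1 ω, S.X 2 ω, S.X 3 ω, S.X 4 ω) := by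
      simp [prOf, funext_iff, Fin.forall_fin_succ]
    have hω := h (S.V ω) (S.X 0 ω) (S.X 1 ω) (S.X 2 ω) (S.X 3 ω) (S.X 4 ω)
    rw [htuple, Fin.prod_univ_five, Fintype.card_fin]
    linear_combination prOf S.p S.V (S.V ω) * hω
  have hnone : condCoordEnt S.law none none = 0 := by simp [condCoordEnt]
  rw [S.coordEnt_law (Y := fun ω => (S.V ω, fun i => S.X i ω))
    (by simp [Option.forall, funext_iff]), Fintype.sum_option, hnone, ← S.ent_V]
  simp only [condCoordEnt_law_some]
  linarith

theorem exists_letter_eq {y : Option (Fin 5) → (Msg t × Msg t) ⊕ S.γ} (hy : 0 < S.law y) :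
    ∃ ω, S.p ω ≠ 0 ∧ S.letter ω = y :=
  exists_of_prOf_pos hy

theorem letter_none_eq_of_msg_eq (y y' : Option (Fin 5) → (Msg t × Msg t) ⊕ S.γ)
    (hy : 0 < S.law y) (hy' : 0 < S.law y') (h : S.msg y = S.msg y') : y none = y' none := by
  obtain ⟨ω, -, rfl⟩ := S.exists_letter_eq hy
  obtain ⟨ω', -, rfl⟩ := S.exists_letter_eq hy'
  exact congrArg Sum.inl h

theorem target_msg_eq_of_eqOn_answered {f11 f12 f21 f22 : S.γ × S.γ × S.γ → Msg t}
    (hdec : ∀ ω, S.p ω ≠ 0 →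
      (S.V ω).1 = f11 (S.X 0 ω, S.X 1 ω, S.X 3 ω) ∧
      (S.V ω).1 = f22 (S.X 0 ω, S.X 2 ω, S.X 4 ω) ∧
      (S.V ω).2 = f12 (S.X 0 ω, S.X 1 ω, S.X 4 ω) ∧
      (S.V ω).2 = f21 (S.X 0 ω, S.X 2 ω, S.X 3 ω))
    (k : Fin 2) (qq : Fin 2 × Fin 2) (hP : stdP k qq ≠ 0)
    (y y' : Option (Fin 5) → (Msg t × Msg t) ⊕ S.γ) (hy : 0 < S.law y) (hy' : 0 < S.law y')
    (hyy' : Set.EqOn y y' (innerLayout.answered qq)) :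
    target k (S.msg y) = target k (S.msg y') := by
  obtain ⟨ω, hω, rfl⟩ := S.exists_letter_eq hy
  obtain ⟨ω', hω', rfl⟩ := S.exists_letter_eq hy'
  obtain ⟨h11, h22, h12, h21⟩ := hdec ω hω
  obtain ⟨h11', h22', h12', h21'⟩ := hdec ω' hω'
  change target k (S.V ω) = target k (S.V ω')
  have hX : ∀ i, some i ∈ innerLayout.answered qq → S.X i ω = S.X i ω' :=
    fun i hi => Sum.inr_injective (hyy' (Finset.mem_coe.mpr hi))
  obtain ⟨c, d⟩ := qq
  fin_cases k <;> fin_cases c <;> fin_cases d <;>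
    try exact absurd (if_neg (by decide)) hP
  · change (S.V ω).1 = (S.V ω').1
    rw [h11, h11', hX 0 (by decide), hX 1 (by decide), hX 3 (by decide)]
  · change (S.V ω).1 = (S.V ω').1
    rw [h22, h22', hX 0 (by decide), hX 2 (by decide), hX 4 (by decide)]
  · change (S.V ω).2 = (S.V ω').2
    rw [h12, h12', hX 0 (by decide), hX 1 (by decide), hX 4 (by decide)]
  · change (S.V ω).2 = (S.V ω').2
    rw [h21, h21', hX 0 (by decide), hX 2 (by decide), hX 3 (by decide)]

end RVSetup

end InnerBound

/-- For every integer `t ≥ 1`, the region `R̃^{(t)}_in` is contained in the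
achievable storage-retrieval rate region `R` of the (2,2) PIR problem. -/
theorem statement8 (t : ℕ) (ht : 1 ≤ t) : {ab : ℝ × ℝ | RtildeMem t ab} ⊆ Region := by
  rintro ab ⟨S, hfact, ⟨f11, f12, f21, f22, hdec⟩, a1, a2, a3, a4, hmd0, heq0, hmd1, heq1, hα, hβ⟩
  let x : Fin 5 → ℝ := ![mi S.p S.V (S.X 0), a1, a2, a3, a4]
  obtain ⟨hx, hstored⟩ := S.nonneg_and_slepianWolf_stored (x := x) rfl hmd0 heq0 hmd1 heq1
  have hscheme : IsSingleLetterScheme innerLayout none S.law S.msg (partRate x)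
      (partRate S.queryRate) :=
    { mem_stdSimplex := S.law_mem_stdSimplex
      slepianWolf_stored := hstored
      slepianWolf_answered := S.slepianWolf_answered
      msg_injective := S.letter_none_eq_of_msg_eq
      decodable := S.target_msg_eq_of_eqOn_answered hdec
      le_coordEnt := (S.coordEnt_law_univ_of_factorizes hfact).ge }
  exact hscheme.achievable ht (partRate_nonneg hx) (partRate_nonneg S.queryRate_nonneg)
    ((sum_partRate_stored x).trans_le hα) ((sum_partRate_queried S.queryRate).trans_le hβ)

end PIR
end
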